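/- arXiv:2001.00410 — 3 statements merged into one kernel-verified Lean document; each statement's English description precedes it below -/
import Mathlib

section
/- Let n ≥ 1 and let f : ℝⁿ → ℝ be a nonnegative, continuous, compactly supported function with ∫_{ℝⁿ} f dx = 1. Let u(t,x) = ∫_{ℝⁿ} (4πt)^{-n/2} exp(-‖x-y‖²/(4t)) f(y) dy be the heat semigroup solution with initial datum f. Then the Shannon entropy power t ↦ N(u(t)) = exp((2/n) H(u(t))) is concave on (0,∞); that is, for all 0 < t₁ ≤ t₂ and λ ∈ [0,1], N(u(λt₁+(1-λ)t₂)) ≥ λ N(u(t₁)) + (1-λ) N(u(t₂)) (equivalently, d²N/dt² ≤ 0 on (0,∞)). -/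
open Real MeasureTheory

/-- The heat semigroup solution on `ℝⁿ` with initial datum `f`. -/
noncomputable def heatSol (n : ℕ) (f : EuclideanSpace ℝ (Fin n) → ℝ)
    (t : ℝ) (x : EuclideanSpace ℝ (Fin n)) : ℝ :=
  ∫ y, (4 * π * t) ^ (-(n : ℝ) / 2) * Real.exp (-‖x - y‖ ^ 2 / (4 * t)) * f y

/-- The Boltzmann–Shannon entropy of the heat solution at time `t`. -/
noncomputable def shannonEntropy (n : ℕ) (f : EuclideanSpace ℝ (Fin n) → ℝ) (t : ℝ) : ℝ :=
  -∫ x, heatSol n f t x * Real.log (heatSol n f t x)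

/-- The Shannon entropy power of the heat solution at time `t`. -/
noncomputable def entropyPower (n : ℕ) (f : EuclideanSpace ℝ (Fin n) → ℝ) (t : ℝ) : ℝ :=
  Real.exp ((2 / (n : ℝ)) * shannonEntropy n f t)


/-- Final ODE comparison step. -/
theorem ep_ode (n : ℕ) (hn : 1 ≤ n) (H I : ℝ → ℝ)
    (hH : ∀ t, 0 < t → HasDerivAt H (I t) t) (hI : ∀ t, 0 < t → 0 ≤ I t)
    (hF : ∀ t s, 0 < t → 0 < s → I (t + s) ≤ I t / (1 + 2 * s * I t / n)) :
    ConcaveOn ℝ (Set.Ioi 0) (fun t => Real.exp ((2 / (n : ℝ)) * H t)) := by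
  have hn0 : (0 : ℝ) < n := by exact_mod_cast hn
  have hN : ∀ t, 0 < t → HasDerivAt (fun t => Real.exp ((2 / (n : ℝ)) * H t))
      (Real.exp ((2 / (n : ℝ)) * H t) * ((2 / (n : ℝ)) * I t)) t := fun t ht =>
    ((hH t ht).const_mul _).exp
  have hcmp : ∀ t s, 0 < t → 0 ≤ s → H (t + s) ≤ H t + (n / 2) * Real.log (1 + 2 * s * I t / n) := by
    intro t s ht hs
    have h0 := hI t ht
    have hd : ∀ s, 0 ≤ s → HasDerivAt (fun s => H (t + s) - (n / 2) * Real.log (1 + 2 * s * I t / n))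
        (I (t + s) - (n / 2) * ((2 * I t / n) / (1 + 2 * s * I t / n))) s := by
      intro s hs
      have hp : 0 < 1 + 2 * s * I t / n := by positivity
      have h1 : HasDerivAt (fun s => H (t + s)) (I (t + s)) s := by
        exact (hH (t + s) (by linarith)).comp_const_add t s
      have h2 : HasDerivAt (fun s => 1 + 2 * s * I t / n) (2 * I t / n) s := by
        have := ((((hasDerivAt_id s).const_mul 2).mul_const (I t)).div_const (n : ℝ)).const_add 1
        simpa using this
      exact h1.sub ((h2.log hp.ne').const_mul _)
    have hanti : AntitoneOn (fun s => H (t + s) - (n / 2) * Real.log (1 + 2 * s * I t / n)) (Set.Ici 0) := by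
      apply antitoneOn_of_deriv_nonpos (convex_Ici 0)
      · exact fun s hs => (hd s hs).continuousAt.continuousWithinAt
      · rw [interior_Ici]
        exact fun s hs => (hd s (le_of_lt hs)).differentiableAt.differentiableWithinAt
      · rw [interior_Ici]
        intro s hs
        rw [(hd s (le_of_lt hs)).deriv]
        have hs' : 0 < s := hs
        have hp : 0 < 1 + 2 * s * I t / n := by positivity
        have := hF t s ht hs
        have e : (n / 2 : ℝ) * ((2 * I t / n) / (1 + 2 * s * I t / n)) = I t / (1 + 2 * s * I t / n) := by
          field_simp
        linarith
    have := hanti (Set.mem_Ici.2 le_rfl) (Set.mem_Ici.2 hs) hs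
    simp at this
    linarith
  apply AntitoneOn.concaveOn_of_deriv (convex_Ioi 0)
  · exact fun t ht => (hN t ht).continuousAt.continuousWithinAt
  · rw [interior_Ioi]
    exact fun t ht => (hN t ht).differentiableAt.differentiableWithinAt
  · rw [interior_Ioi]
    intro t ht r hr htr
    rcases htr.eq_or_lt with rfl | htr
    · rfl
    rw [(hN t ht).deriv, (hN r hr).deriv]
    obtain ⟨s, rfl⟩ : ∃ s, r = t + s := ⟨r - t, by ring⟩
    have hs : 0 < s := by linarith
    have ht' : 0 < t := ht
    have h0 := hI t ht
    have hp : 0 < 1 + 2 * s * I t / n := by positivity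
    have h1 := hcmp t s ht hs.le
    have h2 := hF t s ht hs
    have h3 : Real.exp ((2 / (n : ℝ)) * H (t + s)) ≤
        Real.exp ((2 / (n : ℝ)) * H t) * (1 + 2 * s * I t / n) := by
      have e := Real.exp_log hp
      rw [← e, ← Real.exp_add, Real.exp_le_exp]
      calc (2 / (n : ℝ)) * H (t + s) ≤ (2 / (n : ℝ)) * (H t + (n / 2) * Real.log (1 + 2 * s * I t / n)) := by
            gcongr
        _ = _ := by field_simp
    calc _ ≤ (Real.exp ((2 / (n : ℝ)) * H t) * (1 + 2 * s * I t / n)) *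
          ((2 / (n : ℝ)) * (I t / (1 + 2 * s * I t / n))) := by
          have := hI (t+s) hr
          gcongr
      _ = _ := by field_simp

/-- The Euclidean heat kernel. -/
noncomputable def hkP (n : ℕ) (t : ℝ) (z : EuclideanSpace ℝ (Fin n)) : ℝ :=
  (4 * π * t) ^ (-(n : ℝ) / 2) * Real.exp (-‖z‖ ^ 2 / (4 * t))

/-- First derivative of the kernel. -/
noncomputable def hkA (n : ℕ) (i : Fin n) (t : ℝ) (z : EuclideanSpace ℝ (Fin n)) : ℝ :=
  -(z i) / (2 * t) * hkP n t z

/-- Second derivative of the kernel. -/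
noncomputable def hkB (n : ℕ) (i : Fin n) (t : ℝ) (z : EuclideanSpace ℝ (Fin n)) : ℝ :=
  ((z i) ^ 2 / (4 * t ^ 2) - 1 / (2 * t)) * hkP n t z

theorem hkP_pos (n : ℕ) {t : ℝ} (ht : 0 < t) (z) : 0 < hkP n t z := by
  unfold hkP; positivity

theorem hkP_cont (n : ℕ) {s : Set ℝ} (hs : s ⊆ Set.Ioi 0) :
    ContinuousOn (fun p : ℝ × EuclideanSpace ℝ (Fin n) => hkP n p.1 p.2) (s ×ˢ Set.univ) := by
  unfold hkP
  apply ContinuousOn.mul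
  · apply ContinuousOn.rpow_const
    · fun_prop
    · rintro ⟨t, z⟩ h
      have : 0 < t := hs h.1
      left; positivity
  · apply Real.continuous_exp.comp_continuousOn
    apply ContinuousOn.div (by fun_prop) (by fun_prop)
    rintro ⟨t, z⟩ h
    have : 0 < t := hs h.1
    positivity

theorem hkA_cont (n : ℕ) (i : Fin n) {s : Set ℝ} (hs : s ⊆ Set.Ioi 0) :
    ContinuousOn (fun p : ℝ × EuclideanSpace ℝ (Fin n) => hkA n i p.1 p.2) (s ×ˢ Set.univ) := by
  unfold hkA
  apply ContinuousOn.mul _ (hkP_cont n hs)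
  apply ContinuousOn.div (by fun_prop) (by fun_prop)
  rintro ⟨t, z⟩ h
  have : 0 < t := hs h.1
  positivity

theorem hkB_cont (n : ℕ) (i : Fin n) {s : Set ℝ} (hs : s ⊆ Set.Ioi 0) :
    ContinuousOn (fun p : ℝ × EuclideanSpace ℝ (Fin n) => hkB n i p.1 p.2) (s ×ˢ Set.univ) := by
  unfold hkB
  apply ContinuousOn.mul _ (hkP_cont n hs)
  apply ContinuousOn.sub
  · apply ContinuousOn.div (by fun_prop) (by fun_prop)
    rintro ⟨t, z⟩ h
    have : 0 < t := hs h.1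
    positivity
  · apply ContinuousOn.div (by fun_prop) (by fun_prop)
    rintro ⟨t, z⟩ h
    have : 0 < t := hs h.1
    positivity

theorem hk_cont_slice {n : ℕ} {K : ℝ → EuclideanSpace ℝ (Fin n) → ℝ}
    (hK : ContinuousOn (fun p : ℝ × EuclideanSpace ℝ (Fin n) => K p.1 p.2) (Set.Ioi 0 ×ˢ Set.univ))
    {t : ℝ} (ht : 0 < t) : Continuous (K t) := by
  have : ContinuousOn (fun z => K t z) Set.univ :=
    hK.comp (f := fun z : EuclideanSpace ℝ (Fin n) => (t, z)) (by fun_prop) (fun z _ => ⟨ht, trivial⟩)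
  exact continuousOn_univ.1 this

theorem hkP_cont' (n : ℕ) {t : ℝ} (ht : 0 < t) : Continuous (hkP n t) :=
  hk_cont_slice (hkP_cont n subset_rfl) ht
theorem hkA_cont' (n : ℕ) (i : Fin n) {t : ℝ} (ht : 0 < t) : Continuous (hkA n i t) :=
  hk_cont_slice (hkA_cont n i subset_rfl) ht
theorem hkB_cont' (n : ℕ) (i : Fin n) {t : ℝ} (ht : 0 < t) : Continuous (hkB n i t) :=
  hk_cont_slice (hkB_cont n i subset_rfl) ht

/-- time derivative -/
theorem hkP_dt (n : ℕ) {t : ℝ} (ht : 0 < t) (z : EuclideanSpace ℝ (Fin n)) :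
    HasDerivAt (fun t => hkP n t z) (∑ i, hkB n i t z) t := by
  unfold hkB
  rw [← Finset.sum_mul, Finset.sum_sub_distrib, ← Finset.sum_div]
  have hz : ∑ i, (z i) ^ 2 = ‖z‖ ^ 2 := by simp [EuclideanSpace.norm_sq_eq]
  rw [hz]
  unfold hkP
  have h1 : HasDerivAt (fun t => (4 * π * t) ^ (-(n : ℝ) / 2))
      ((4 * π) * (-(n : ℝ) / 2) * (4 * π * t) ^ (-(n : ℝ) / 2 - 1)) t := by
    have : HasDerivAt (fun t => 4 * π * t) (4 * π) t := by
      simpa using (hasDerivAt_id t).const_mul (4 * π)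
    exact this.rpow_const (Or.inl (by positivity))
  have h2 : HasDerivAt (fun t => Real.exp (-‖z‖ ^ 2 / (4 * t)))
      (Real.exp (-‖z‖ ^ 2 / (4 * t)) * (‖z‖ ^ 2 / (4 * t ^ 2))) t := by
    have h3 : HasDerivAt (fun t => 4 * t) 4 t := by
      simpa using (hasDerivAt_id t).const_mul 4
    have := ((hasDerivAt_const t (-‖z‖ ^ 2)).div h3 (by positivity)).exp
    convert! this using 2
    field_simp
    ring
  convert! h1.mul h2 using 1
  rw [Real.rpow_sub_one (by positivity)]
  simp
  field_simp
  ring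

theorem hkP_line (n : ℕ) (i : Fin n) {t : ℝ} (ht : 0 < t) (z : EuclideanSpace ℝ (Fin n)) (s : ℝ) :
    HasDerivAt (fun s : ℝ => hkP n t (z + s • EuclideanSpace.single i (1 : ℝ)))
      (hkA n i t (z + s • EuclideanSpace.single i (1 : ℝ))) s := by
  unfold hkA hkP
  have h0 : HasDerivAt (fun s : ℝ => z + s • EuclideanSpace.single i (1 : ℝ))
      (EuclideanSpace.single i (1 : ℝ)) s := by
    simpa using ((hasDerivAt_id s).smul_const (EuclideanSpace.single i (1 : ℝ))).const_add z
  have h1 := ((h0.norm_sq.neg.div_const (4 * t)).exp).const_mul ((4 * π * t) ^ (-(n : ℝ) / 2))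
  convert! h1 using 1
  rw [EuclideanSpace.inner_single_right]
  simp
  field_simp
  ring

theorem hkA_line (n : ℕ) (i : Fin n) {t : ℝ} (ht : 0 < t) (z : EuclideanSpace ℝ (Fin n)) (s : ℝ) :
    HasDerivAt (fun s : ℝ => hkA n i t (z + s • EuclideanSpace.single i (1 : ℝ)))
      (hkB n i t (z + s • EuclideanSpace.single i (1 : ℝ))) s := by
  have h1 := hkP_line n i ht z s
  unfold hkA hkB
  have h2 : HasDerivAt (fun s : ℝ => -((z + s • EuclideanSpace.single i (1 : ℝ)) i) / (2 * t))
      (-1 / (2 * t)) s := by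
    have := (((hasDerivAt_id s).const_add (z i)).neg).div_const (2 * t)
    simpa using this
  convert! h2.mul h1 using 1
  unfold hkA
  field_simp
  ring

theorem lineDeriv_iff {n : ℕ} {g : EuclideanSpace ℝ (Fin n) → ℝ} {c : ℝ} {x v : EuclideanSpace ℝ (Fin n)} :
    HasLineDerivAt ℝ g c x v ↔ HasDerivAt (fun s : ℝ => g (x + s • v)) c 0 := Iff.rfl


theorem gauss_int (n : ℕ) {c : ℝ} (hc : 0 < c) :
    Integrable (fun x : EuclideanSpace ℝ (Fin n) => Real.exp (-c * ‖x‖ ^ 2)) := by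
  have h := (GaussianFourier.integrable_cexp_neg_mul_sq_norm_add (V := EuclideanSpace ℝ (Fin n))
    (b := (c : ℂ)) (by simpa using hc) 0 0).norm
  refine h.congr (Filter.Eventually.of_forall fun x => ?_)
  simp [Complex.norm_exp, ← Complex.ofReal_pow]

theorem poly_gauss_int (n : ℕ) {c : ℝ} (hc : 0 < c) :
    Integrable (fun x : EuclideanSpace ℝ (Fin n) => (1 + ‖x‖ ^ 2) ^ 2 * Real.exp (-c * ‖x‖ ^ 2)) := by
  have h := (gauss_int n (half_pos hc)).const_mul (2 / (c / 2) ^ 2 * Real.exp (c / 2))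
  refine h.mono' (by fun_prop) (Filter.Eventually.of_forall fun x => ?_)
  rw [Real.norm_of_nonneg (by positivity)]
  have h1 := Real.quadratic_le_exp_of_nonneg (x := c / 2 * (1 + ‖x‖ ^ 2)) (by positivity)
  have h2 : (1 + ‖x‖ ^ 2) ^ 2 ≤ 2 / (c / 2) ^ 2 * Real.exp (c / 2 * (1 + ‖x‖ ^ 2)) := by
    rw [div_mul_eq_mul_div, le_div_iff₀ (by positivity)]
    have : 0 ≤ c / 2 * (1 + ‖x‖ ^ 2) := by positivity
    nlinarith
  calc _ ≤ (2 / (c / 2) ^ 2 * Real.exp (c / 2 * (1 + ‖x‖ ^ 2))) * Real.exp (-c * ‖x‖ ^ 2) := by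
        gcongr
    _ = _ := by
        rw [mul_assoc, ← Real.exp_add, mul_assoc, ← Real.exp_add]
        congr 2; ring

theorem int_of_bound {n : ℕ} {c C : ℝ} (hc : 0 < c) {g : EuclideanSpace ℝ (Fin n) → ℝ}
    (hg : Continuous g) (hb : ∀ x, |g x| ≤ C * ((1 + ‖x‖ ^ 2) ^ 2 * Real.exp (-c * ‖x‖ ^ 2))) :
    Integrable g :=
  ((poly_gauss_int n hc).const_mul C).mono' hg.aestronglyMeasurable
    (Filter.Eventually.of_forall hb)

theorem coord_sq_le {n : ℕ} (z : EuclideanSpace ℝ (Fin n)) (i : Fin n) : (z i) ^ 2 ≤ ‖z‖ ^ 2 := by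
  have := EuclideanSpace.norm_sq_eq z
  simp only [Real.norm_eq_abs, sq_abs] at this
  rw [this]
  exact Finset.single_le_sum (f := fun i => (z i) ^ 2) (fun i _ => sq_nonneg _) (Finset.mem_univ i)

theorem coord_le {n : ℕ} (z : EuclideanSpace ℝ (Fin n)) (i : Fin n) : |z i| ≤ 1 + ‖z‖ ^ 2 := by
  have := coord_sq_le z i
  rw [abs_le]
  constructor <;> nlinarith [sq_nonneg (z i + 1), sq_nonneg (z i - 1)]

theorem poly_hkP_int {n : ℕ} {t C : ℝ} (ht : 0 < t) {q : EuclideanSpace ℝ (Fin n) → ℝ}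
    (hq : Continuous q) (hb : ∀ x, |q x| ≤ C * (1 + ‖x‖ ^ 2)) :
    Integrable (fun z => q z * hkP n t z) := by
  have hC : 0 ≤ C := by
    have := (abs_nonneg _).trans (hb 0)
    simpa using this
  refine int_of_bound (c := 1 / (4 * t)) (C := C * (4 * π * t) ^ (-(n : ℝ) / 2)) (by positivity)
    (hq.mul (hkP_cont' n ht)) (fun x => ?_)
  rw [abs_mul, abs_of_pos (hkP_pos n ht x)]
  unfold hkP
  have e : -‖x‖ ^ 2 / (4 * t) = -(1 / (4 * t)) * ‖x‖ ^ 2 := by ring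
  rw [e]
  have h1 : |q x| ≤ C * (1 + ‖x‖ ^ 2) ^ 2 := by
    refine (hb x).trans ?_
    gcongr
    nlinarith [sq_nonneg ‖x‖]
  calc _ ≤ (C * (1 + ‖x‖ ^ 2) ^ 2) * ((4 * π * t) ^ (-(n : ℝ) / 2) * Real.exp (-(1 / (4 * t)) * ‖x‖ ^ 2)) := by
        gcongr
    _ = _ := by ring

theorem hkP_int (n : ℕ) {t : ℝ} (ht : 0 < t) : Integrable (hkP n t) := by
  have := poly_hkP_int (n := n) (C := 1) ht (q := fun _ => 1) (by fun_prop) (fun x => by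
    simp)
  simpa using this

theorem coord_hkP_int (n : ℕ) (i : Fin n) {t : ℝ} (ht : 0 < t) :
    Integrable (fun z => z i * hkP n t z) :=
  poly_hkP_int (n := n) (C := 1) ht (q := fun z => z i) (by fun_prop) (fun x => by
    simpa using coord_le x i)

theorem coordsq_hkP_int (n : ℕ) (i : Fin n) {t : ℝ} (ht : 0 < t) :
    Integrable (fun z => (z i) ^ 2 * hkP n t z) :=
  poly_hkP_int (n := n) (C := 1) ht (q := fun z => (z i) ^ 2) (by fun_prop) (fun x => by
    have := coord_sq_le x i
    rw [abs_of_nonneg (by positivity)]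
    linarith)

theorem hkA_int (n : ℕ) (i : Fin n) {t : ℝ} (ht : 0 < t) : Integrable (hkA n i t) := by
  refine ((coord_hkP_int n i ht).const_mul (-1 / (2 * t))).congr (Filter.Eventually.of_forall fun z => ?_)
  simp only [hkA]; ring

theorem hkB_int (n : ℕ) (i : Fin n) {t : ℝ} (ht : 0 < t) : Integrable (hkB n i t) := by
  refine (((coordsq_hkP_int n i ht).const_mul (1 / (4 * t ^ 2))).sub
    ((hkP_int n ht).const_mul (1 / (2 * t)))).congr (Filter.Eventually.of_forall fun z => ?_)
  simp only [hkB, Pi.sub_apply]; ring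

theorem hkP_integral (n : ℕ) {t : ℝ} (ht : 0 < t) : ∫ z, hkP n t z = 1 := by
  unfold hkP
  rw [integral_const_mul]
  have e : ∀ z : EuclideanSpace ℝ (Fin n), -‖z‖ ^ 2 / (4 * t) = -(1 / (4 * t)) * ‖z‖ ^ 2 := by
    intro z; ring
  simp_rw [e]
  rw [GaussianFourier.integral_rexp_neg_mul_sq_norm (by positivity), finrank_euclideanSpace_fin]
  have : π / (1 / (4 * t)) = 4 * π * t := by field_simp
  rw [this, ← Real.rpow_add (by positivity)]
  have : -(n : ℝ) / 2 + n / 2 = 0 := by ring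
  rw [this, Real.rpow_zero]

theorem integral_lineDeriv_zero {n : ℕ} {g g' : EuclideanSpace ℝ (Fin n) → ℝ} {v : EuclideanSpace ℝ (Fin n)}
    (hg : Integrable g) (hg' : Integrable g') (h : ∀ x, HasLineDerivAt ℝ g (g' x) x v) :
    ∫ x, g' x = 0 := by
  have := integral_bilinear_hasLineDerivAt_right_eq_neg_left_of_integrable
    (μ := (volume : Measure (EuclideanSpace ℝ (Fin n)))) (f := fun _ => (1 : ℝ)) (f' := fun _ => 0)
    (g := g) (g' := g') (v := v) (B := ContinuousLinearMap.mul ℝ ℝ) (by simp) (by simpa using hg')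
    (by simpa using hg) (fun x _ => by
      rw [lineDeriv_iff]; exact hasDerivAt_const _ _) (fun x _ => h x)
  simpa using this

theorem hkA_integral (n : ℕ) (i : Fin n) {t : ℝ} (ht : 0 < t) : ∫ z, hkA n i t z = 0 := by
  apply integral_lineDeriv_zero (v := EuclideanSpace.single i 1) (hkP_int n ht) (hkA_int n i ht)
  intro x
  rw [lineDeriv_iff]
  simpa using hkP_line n i ht x 0

theorem hkB_integral (n : ℕ) (i : Fin n) {t : ℝ} (ht : 0 < t) : ∫ z, hkB n i t z = 0 := by
  apply integral_lineDeriv_zero (v := EuclideanSpace.single i 1) (hkA_int n i ht) (hkB_int n i ht)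
  intro x
  rw [lineDeriv_iff]
  simpa using hkA_line n i ht x 0

theorem coord_hkP_integral (n : ℕ) (i : Fin n) {t : ℝ} (ht : 0 < t) :
    ∫ z : EuclideanSpace ℝ (Fin n), z i * hkP n t z = 0 := by
  have h := hkA_integral n i ht
  have e : ∀ z : EuclideanSpace ℝ (Fin n), hkA n i t z = (-1 / (2 * t)) * (z i * hkP n t z) := by
    intro z; simp only [hkA]; ring
  simp_rw [e, integral_const_mul] at h
  rcases mul_eq_zero.1 h with h | h
  · exfalso
    have : -1 / (2 * t) ≠ 0 := by
      apply div_ne_zero <;> positivity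
    exact this h
  · exact h

/-- score-squared kernel -/
noncomputable def hkS (n : ℕ) (i : Fin n) (t : ℝ) (z : EuclideanSpace ℝ (Fin n)) : ℝ :=
  (-(z i) / (2 * t)) ^ 2 * hkP n t z

theorem hkS_eq (n : ℕ) (i : Fin n) {t : ℝ} (ht : 0 < t) :
    hkS n i t = fun z => hkB n i t z + 1 / (2 * t) * hkP n t z := by
  ext z
  simp only [hkS, hkB]; field_simp; ring

theorem hkS_int (n : ℕ) (i : Fin n) {t : ℝ} (ht : 0 < t) : Integrable (hkS n i t) := by
  rw [hkS_eq n i ht]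
  exact (hkB_int n i ht).add ((hkP_int n ht).const_mul _)

theorem hkS_integral (n : ℕ) (i : Fin n) {t : ℝ} (ht : 0 < t) : ∫ z, hkS n i t z = 1 / (2 * t) := by
  rw [hkS_eq n i ht, integral_add (hkB_int n i ht) ((hkP_int n ht).const_mul _),
    integral_const_mul, hkB_integral n i ht, hkP_integral n ht]
  ring

/-- Gaussian completion of squares. -/
theorem hkP_mul (n : ℕ) {t s : ℝ} (ht : 0 < t) (hs : 0 < s) (x y : EuclideanSpace ℝ (Fin n)) :
    hkP n t y * hkP n s (x - y) =
      hkP n (t + s) x * hkP n (t * s / (t + s)) (y - (t / (t + s)) • x) := by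
  unfold hkP
  have h1 : (4 * π * t) ^ (-(n : ℝ) / 2) * (4 * π * s) ^ (-(n : ℝ) / 2) =
      (4 * π * (t + s)) ^ (-(n : ℝ) / 2) * (4 * π * (t * s / (t + s))) ^ (-(n : ℝ) / 2) := by
    rw [← Real.mul_rpow (by positivity) (by positivity), ← Real.mul_rpow (by positivity) (by positivity)]
    congr 1
    field_simp
  have h2 : Real.exp (-‖y‖ ^ 2 / (4 * t)) * Real.exp (-‖x - y‖ ^ 2 / (4 * s)) =
      Real.exp (-‖x‖ ^ 2 / (4 * (t + s))) *
        Real.exp (-‖y - (t / (t + s)) • x‖ ^ 2 / (4 * (t * s / (t + s)))) := by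
    rw [← Real.exp_add, ← Real.exp_add]
    congr 1
    rw [norm_sub_sq_real, norm_sub_sq_real, norm_smul, inner_smul_right, real_inner_comm x y, mul_pow,
      Real.norm_eq_abs, sq_abs]
    field_simp
    ring
  calc _ = ((4 * π * t) ^ (-(n : ℝ) / 2) * (4 * π * s) ^ (-(n : ℝ) / 2)) *
      (Real.exp (-‖y‖ ^ 2 / (4 * t)) * Real.exp (-‖x - y‖ ^ 2 / (4 * s))) := by ring
    _ = _ := by rw [h1, h2]; ring

/-- scalar convolution -/
noncomputable abbrev cv {n : ℕ} (f g : EuclideanSpace ℝ (Fin n) → ℝ) : EuclideanSpace ℝ (Fin n) → ℝ :=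
  convolution f g (ContinuousLinearMap.mul ℝ ℝ) volume

theorem cv_apply {n : ℕ} (f g : EuclideanSpace ℝ (Fin n) → ℝ) (x) :
    cv f g x = ∫ y, f y * g (x - y) := rfl

theorem cv_comm {n : ℕ} (f g : EuclideanSpace ℝ (Fin n) → ℝ) : cv f g = cv g f := by
  ext x
  rw [cv_apply, cv_apply, ← integral_sub_left_eq_self _ volume x]
  congr 1
  ext y
  simp [mul_comm]

theorem cv_PP (n : ℕ) {t s : ℝ} (ht : 0 < t) (hs : 0 < s) :
    cv (hkP n t) (hkP n s) = hkP n (t + s) := by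
  ext x
  rw [cv_apply]
  simp_rw [hkP_mul n ht hs x]
  rw [integral_const_mul, integral_sub_right_eq_self (fun z => hkP n (t * s / (t + s)) z),
    hkP_integral n (by positivity), mul_one]

theorem cv_AP (n : ℕ) (i : Fin n) {t s : ℝ} (ht : 0 < t) (hs : 0 < s) :
    cv (hkA n i t) (hkP n s) = hkA n i (t + s) := by
  ext x
  rw [cv_apply]
  have hτ : 0 < t * s / (t + s) := by positivity
  have e : ∀ y, hkA n i t y * hkP n s (x - y) =
      (fun z : EuclideanSpace ℝ (Fin n) => (-1 / (2 * t) * hkP n (t + s) x) * (z i * hkP n (t * s / (t + s)) z)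
        + hkA n i (t + s) x * hkP n (t * s / (t + s)) z) (y - (t / (t + s)) • x) := by
    intro y
    have := hkP_mul n ht hs x y
    simp only [hkA]
    rw [mul_assoc, this]
    simp
    field_simp
    ring
  simp_rw [e]
  rw [integral_sub_right_eq_self (fun z : EuclideanSpace ℝ (Fin n) => (-1 / (2 * t) * hkP n (t + s) x) * (z i * hkP n (t * s / (t + s)) z)
        + hkA n i (t + s) x * hkP n (t * s / (t + s)) z),
    integral_add ((coord_hkP_int n i hτ).const_mul _) ((hkP_int n hτ).const_mul _),
    integral_const_mul, integral_const_mul, hkP_integral n hτ, coord_hkP_integral n i hτ]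
  ring

theorem cv_PA (n : ℕ) (i : Fin n) {t s : ℝ} (ht : 0 < t) (hs : 0 < s) :
    cv (hkP n t) (hkA n i s) = hkA n i (t + s) := by
  rw [cv_comm, cv_AP n i hs ht, add_comm]

theorem cv_assoc_ae {n : ℕ} {f g k : EuclideanSpace ℝ (Fin n) → ℝ} (hf : Integrable f)
    (hg : Integrable g) (hk : Integrable k) : ∀ᵐ x, cv (cv f g) k x = cv f (cv g k) x := by
  have h := hf.norm.ae_convolution_exists (ContinuousLinearMap.mul ℝ ℝ)
    (hg.norm.integrable_convolution (ContinuousLinearMap.mul ℝ ℝ) hk.norm)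
  filter_upwards [h] with x hx
  exact convolution_assoc _ _ _ _ (fun x y z => by simp [mul_assoc]) hf.aestronglyMeasurable
    hg.aestronglyMeasurable hk.aestronglyMeasurable (hf.ae_convolution_exists _ hg)
    (hg.norm.ae_convolution_exists _ hk.norm) hx


theorem fK_int {n : ℕ} {f : EuclideanSpace ℝ (Fin n) → ℝ} (hf : Continuous f)
    (hs : HasCompactSupport f) {K : EuclideanSpace ℝ (Fin n) → ℝ} (hK : Continuous K) :
    Integrable (fun y => f y * K y) :=
  (hf.mul hK).integrable_of_hasCompactSupport hs.mul_right

theorem diff_under {n : ℕ} {f : EuclideanSpace ℝ (Fin n) → ℝ} (hf : Continuous f)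
    (hs : HasCompactSupport f) {K K' : ℝ → EuclideanSpace ℝ (Fin n) → ℝ} {s₀ ε : ℝ} (hε : 0 < ε)
    (hK : ∀ s ∈ Metric.closedBall s₀ ε, Continuous (K s))
    (hK' : ContinuousOn (fun p : ℝ × EuclideanSpace ℝ (Fin n) => K' p.1 p.2)
      (Metric.closedBall s₀ ε ×ˢ Set.univ))
    (hd : ∀ s ∈ Metric.closedBall s₀ ε, ∀ y, HasDerivAt (fun s => K s y) (K' s y) s) :
    HasDerivAt (fun s => ∫ y, f y * K s y) (∫ y, f y * K' s₀ y) s₀ := by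
  have hmem : s₀ ∈ Metric.closedBall s₀ ε := Metric.mem_closedBall_self hε.le
  obtain ⟨C, hC⟩ := ((isCompact_closedBall s₀ ε).prod hs).exists_bound_of_continuousOn
    (hK'.mono (Set.prod_mono subset_rfl (Set.subset_univ (tsupport f))))
  have hK0 : Continuous (K' s₀) := by
    have : ContinuousOn (fun z => K' s₀ z) Set.univ :=
      hK'.comp (f := fun z : EuclideanSpace ℝ (Fin n) => (s₀, z)) (by fun_prop)
        (fun z _ => ⟨hmem, trivial⟩)
    exact continuousOn_univ.1 this
  refine (hasDerivAt_integral_of_dominated_loc_of_deriv_le (F := fun s y => f y * K s y)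
    (F' := fun s y => f y * K' s y) (bound := fun y => |f y| * C)
    (Metric.closedBall_mem_nhds s₀ hε) ?_ ?_ ?_ ?_ ?_ ?_).2
  · filter_upwards [Metric.closedBall_mem_nhds s₀ hε] with s hs'
    exact (hf.mul (hK s hs')).aestronglyMeasurable
  · exact fK_int hf hs (hK s₀ hmem)
  · exact (hf.mul hK0).aestronglyMeasurable
  · refine Filter.Eventually.of_forall fun y s hs' => ?_
    by_cases hy : y ∈ tsupport f
    · have := hC (s, y) ⟨hs', hy⟩
      rw [norm_mul, Real.norm_eq_abs]
      gcongr
    · simp [image_eq_zero_of_notMem_tsupport hy]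
  · exact (hf.integrable_of_hasCompactSupport hs).abs.mul_const C
  · exact Filter.Eventually.of_forall fun y s hs' => (hd s hs' y).const_mul _

theorem cv_cont {n : ℕ} {f : EuclideanSpace ℝ (Fin n) → ℝ} (hf : Continuous f)
    (hs : HasCompactSupport f) {K : EuclideanSpace ℝ (Fin n) → ℝ} (hK : Continuous K) :
    Continuous (cv f K) :=
  hs.continuous_convolution_left _ hf hK.locallyIntegrable

theorem cv_line {n : ℕ} {f : EuclideanSpace ℝ (Fin n) → ℝ} (hf : Continuous f)
    (hs : HasCompactSupport f) {K K' : EuclideanSpace ℝ (Fin n) → ℝ} {e : EuclideanSpace ℝ (Fin n)}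
    (hK : Continuous K) (hK' : Continuous K')
    (hd : ∀ z (s : ℝ), HasDerivAt (fun s : ℝ => K (z + s • e)) (K' (z + s • e)) s) (x) :
    HasLineDerivAt ℝ (cv f K) (cv f K' x) x e := by
  rw [lineDeriv_iff]
  have := diff_under hf hs (K := fun s y => K (x - y + s • e)) (K' := fun s y => K' (x - y + s • e))
    (s₀ := 0) (ε := 1) one_pos (fun s _ => by fun_prop) (by fun_prop) (fun s _ y => hd (x - y) s)
  simp only [cv_apply]
  convert! this using 2
  · congr 1; ext y; congr 2; abel
  · simp

theorem cv_u_line {n : ℕ} {f : EuclideanSpace ℝ (Fin n) → ℝ} (hf : Continuous f)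
    (hs : HasCompactSupport f) (i : Fin n) {t : ℝ} (ht : 0 < t) (x) :
    HasLineDerivAt ℝ (cv f (hkP n t)) (cv f (hkA n i t) x) x (EuclideanSpace.single i 1) :=
  cv_line hf hs (hkP_cont' n ht) (hkA_cont' n i ht) (hkP_line n i ht) x

theorem cv_v_line {n : ℕ} {f : EuclideanSpace ℝ (Fin n) → ℝ} (hf : Continuous f)
    (hs : HasCompactSupport f) (i : Fin n) {t : ℝ} (ht : 0 < t) (x) :
    HasLineDerivAt ℝ (cv f (hkA n i t)) (cv f (hkB n i t) x) x (EuclideanSpace.single i 1) :=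
  cv_line hf hs (hkA_cont' n i ht) (hkB_cont' n i ht) (hkA_line n i ht) x

theorem cv_u_dt {n : ℕ} {f : EuclideanSpace ℝ (Fin n) → ℝ} (hf : Continuous f)
    (hs : HasCompactSupport f) {t : ℝ} (ht : 0 < t) (x) :
    HasDerivAt (fun t => cv f (hkP n t) x) (∑ i, cv f (hkB n i t) x) t := by
  have hsub : Metric.closedBall t (t / 2) ⊆ Set.Ioi 0 := by
    intro s hs'
    rw [Metric.mem_closedBall, Real.dist_eq, abs_le] at hs'
    simp only [Set.mem_Ioi]
    linarith
  have := diff_under hf hs (K := fun s y => hkP n s (x - y)) (K' := fun s y => ∑ i, hkB n i s (x - y))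
    (s₀ := t) (ε := t / 2) (by positivity)
    (fun s hs' => (hkP_cont' n (hsub hs')).comp (by fun_prop)) (by
      apply continuousOn_finsetSum
      intro i _
      exact (hkB_cont n i hsub).comp (f := fun p : ℝ × EuclideanSpace ℝ (Fin n) => (p.1, x - p.2))
        (by fun_prop) (fun p hp => ⟨hp.1, trivial⟩))
    (fun s hs' y => hkP_dt n (hsub hs') (x - y))
  convert! this using 1
  simp_rw [Finset.mul_sum]
  rw [integral_finsetSum]
  · rfl
  · intro i _
    exact fK_int hf hs ((hkB_cont' n i ht).comp (by fun_prop))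

theorem cv_bound {n : ℕ} {f : EuclideanSpace ℝ (Fin n) → ℝ} (hf : Continuous f)
    (hs : HasCompactSupport f) (hf0 : ∀ x, 0 ≤ f x) {K P : EuclideanSpace ℝ (Fin n) → ℝ}
    (hP : Continuous P) {R : ℝ} (hR : ∀ y, f y ≠ 0 → ‖y‖ ≤ R) {c : ℝ} (x)
    (h : ∀ y, ‖y‖ ≤ R → |K (x - y)| ≤ c * P (x - y)) : |cv f K x| ≤ c * cv f P x := by
  rw [cv_apply, cv_apply, ← integral_const_mul, ← Real.norm_eq_abs]
  apply norm_integral_le_of_norm_le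
  · exact (fK_int hf hs (hP.comp (by fun_prop))).const_mul c
  · refine Filter.Eventually.of_forall fun y => ?_
    by_cases hy : f y = 0
    · simp [hy]
    · have := h y (hR y hy)
      rw [Real.norm_eq_abs, abs_mul, abs_of_nonneg (hf0 y)]
      calc _ ≤ f y * (c * P (x - y)) := by
            have := hf0 y
            gcongr
        _ = _ := by ring

theorem cv_le_const {n : ℕ} {f : EuclideanSpace ℝ (Fin n) → ℝ} (hf : Continuous f)
    (hs : HasCompactSupport f) (hf0 : ∀ x, 0 ≤ f x) (hf1 : ∫ x, f x = 1) {P : EuclideanSpace ℝ (Fin n) → ℝ}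
    (hP : Continuous P) {R : ℝ} (hR : ∀ y, f y ≠ 0 → ‖y‖ ≤ R) {c : ℝ} (x)
    (h : ∀ y, ‖y‖ ≤ R → P (x - y) ≤ c) : cv f P x ≤ c := by
  have e : c = ∫ y, f y * c := by rw [integral_mul_const, hf1, one_mul]
  rw [cv_apply, e]
  apply integral_mono (fK_int hf hs (hP.comp (by fun_prop))) (fK_int hf hs (by fun_prop))
  intro y
  by_cases hy : f y = 0
  · simp [hy]
  · exact mul_le_mul_of_nonneg_left (h y (hR y hy)) (hf0 y)

theorem const_le_cv {n : ℕ} {f : EuclideanSpace ℝ (Fin n) → ℝ} (hf : Continuous f)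
    (hs : HasCompactSupport f) (hf0 : ∀ x, 0 ≤ f x) (hf1 : ∫ x, f x = 1) {P : EuclideanSpace ℝ (Fin n) → ℝ}
    (hP : Continuous P) {R : ℝ} (hR : ∀ y, f y ≠ 0 → ‖y‖ ≤ R) {c : ℝ} (x)
    (h : ∀ y, ‖y‖ ≤ R → c ≤ P (x - y)) : c ≤ cv f P x := by
  have e : c = ∫ y, f y * c := by rw [integral_mul_const, hf1, one_mul]
  rw [cv_apply, e]
  apply integral_mono (fK_int hf hs (by fun_prop)) (fK_int hf hs (hP.comp (by fun_prop)))
  intro y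
  by_cases hy : f y = 0
  · simp [hy]
  · exact mul_le_mul_of_nonneg_left (h y (hR y hy)) (hf0 y)

theorem norm_sub_bounds {n : ℕ} {R : ℝ} (x y : EuclideanSpace ℝ (Fin n)) (hy : ‖y‖ ≤ R) :
    ‖x - y‖ ^ 2 ≤ 2 * ‖x‖ ^ 2 + 2 * R ^ 2 ∧ ‖x‖ ^ 2 / 2 - R ^ 2 ≤ ‖x - y‖ ^ 2 := by
  have h0 := norm_nonneg y
  have h1 := norm_sub_le x y
  have h2 := norm_sub_norm_le x y
  have h3 := norm_nonneg (x - y)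
  have h4 := norm_nonneg x
  have hyR : ‖y‖ ^ 2 ≤ R ^ 2 := by gcongr
  constructor
  · nlinarith [sq_nonneg (‖x‖ - ‖y‖)]
  · have : ‖x‖ ≤ ‖x - y‖ + ‖y‖ := by linarith
    nlinarith [sq_nonneg (‖x - y‖ - ‖y‖)]

/-- All uniform estimates in one package. -/
theorem heat_bounds {n : ℕ} {f : EuclideanSpace ℝ (Fin n) → ℝ} (hf : Continuous f)
    (hs : HasCompactSupport f) (hf0 : ∀ x, 0 ≤ f x) (hf1 : ∫ x, f x = 1) {a b : ℝ} (ha : 0 < a)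
    (hab : a ≤ b) :
    ∃ C c : ℝ, 0 < C ∧ 0 < c ∧ ∀ t, a ≤ t → t ≤ b → ∀ x,
      0 < cv f (hkP n t) x ∧ cv f (hkP n t) x ≤ C * Real.exp (-c * ‖x‖ ^ 2) ∧
      |Real.log (cv f (hkP n t) x)| ≤ C * (1 + ‖x‖ ^ 2) ∧
      (∀ i, |cv f (hkA n i t) x| ≤ C * (1 + ‖x‖ ^ 2) * cv f (hkP n t) x) ∧
      (∀ i, |cv f (hkB n i t) x| ≤ C * (1 + ‖x‖ ^ 2) * cv f (hkP n t) x) := by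
  have hb : 0 < b := ha.trans_le hab
  obtain ⟨R, hR⟩ : ∃ R : ℝ, ∀ y, f y ≠ 0 → ‖y‖ ≤ R := by
    obtain ⟨R, hR⟩ := hs.isBounded.exists_norm_le
    exact ⟨R, fun y hy => hR y (subset_tsupport f hy)⟩
  set C1 : ℝ := (1 / (4 * a ^ 2) + 1 / (2 * a)) * (2 + 2 * R ^ 2) with hC1
  set Cu : ℝ := (4 * π * a) ^ (-(n : ℝ) / 2) * Real.exp (R ^ 2 / (4 * a)) with hCu
  set Cl : ℝ := (4 * π * b) ^ (-(n : ℝ) / 2) with hCl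
  set C2 : ℝ := |Real.log Cu| + |Real.log Cl| + (1 + R ^ 2) / (2 * a) with hC2
  have hC1p : 0 < C1 := by positivity
  have hCup : 0 < Cu := by positivity
  have hClp : 0 < Cl := by positivity
  have hC2p : 0 < C2 := by positivity
  refine ⟨C1 + Cu + C2, 1 / (8 * b), by positivity, by positivity, ?_⟩
  intro t hat htb x
  have ht : 0 < t := ha.trans_le hat
  have hpow : ∀ {p q : ℝ}, 0 < p → p ≤ q → (4 * π * q) ^ (-(n : ℝ) / 2) ≤ (4 * π * p) ^ (-(n : ℝ) / 2) := by
    intro p q hp hpq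
    apply Real.rpow_le_rpow_of_nonpos (by positivity) (by gcongr)
    have : (0 : ℝ) ≤ n := by positivity
    linarith
  have hlow : Cl * Real.exp (-(‖x‖ ^ 2 + R ^ 2) / (2 * a)) ≤ cv f (hkP n t) x := by
    apply const_le_cv hf hs hf0 hf1 (hkP_cont' n ht) hR
    intro y hy
    have h1 := (norm_sub_bounds x y hy).1
    unfold hkP
    have h2 := hpow ht htb
    have h3 : -(‖x‖ ^ 2 + R ^ 2) / (2 * a) ≤ -‖x - y‖ ^ 2 / (4 * t) := by
      rw [neg_div, neg_div, neg_le_neg_iff]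
      calc ‖x - y‖ ^ 2 / (4 * t) ≤ (2 * ‖x‖ ^ 2 + 2 * R ^ 2) / (4 * a) := by gcongr
        _ = _ := by field_simp; ring
    gcongr
  have hpos : 0 < cv f (hkP n t) x := lt_of_lt_of_le (by positivity) hlow
  have hup : cv f (hkP n t) x ≤ Cu * Real.exp (-(1 / (8 * b)) * ‖x‖ ^ 2) := by
    apply cv_le_const hf hs hf0 hf1 (hkP_cont' n ht) hR
    intro y hy
    have h1 := (norm_sub_bounds x y hy).2
    unfold hkP
    have h2 := hpow ha hat
    have h3 : -‖x - y‖ ^ 2 / (4 * t) ≤ R ^ 2 / (4 * a) + -(1 / (8 * b)) * ‖x‖ ^ 2 := by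
      calc -‖x - y‖ ^ 2 / (4 * t) ≤ -(‖x‖ ^ 2 / 2 - R ^ 2) / (4 * t) := by gcongr
        _ = R ^ 2 / (4 * t) + - (‖x‖ ^ 2 / (8 * t)) := by field_simp; ring
        _ ≤ R ^ 2 / (4 * a) + - (‖x‖ ^ 2 / (8 * b)) := by gcongr
        _ = _ := by ring
    rw [hCu, mul_assoc (_ ^ _) (Real.exp _) (Real.exp _), ← Real.exp_add]
    gcongr
  have hX : 1 ≤ 1 + ‖x‖ ^ 2 := by nlinarith [sq_nonneg ‖x‖]
  have hz : ∀ y, ‖y‖ ≤ R → 1 + ‖x - y‖ ^ 2 ≤ (2 + 2 * R ^ 2) * (1 + ‖x‖ ^ 2) := by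
    intro y hy
    have h1 := (norm_sub_bounds x y hy).1
    nlinarith [sq_nonneg ‖x‖, sq_nonneg R, mul_nonneg (sq_nonneg ‖x‖) (sq_nonneg R)]
  refine ⟨hpos, hup.trans ?_, ?_, ?_, ?_⟩
  · gcongr; linarith
  · have hl1 : Real.log (cv f (hkP n t) x) ≤ Real.log Cu := by
      apply Real.log_le_log hpos
      refine hup.trans ?_
      have : Real.exp (-(1 / (8 * b)) * ‖x‖ ^ 2) ≤ 1 := by
        rw [Real.exp_le_one_iff, neg_mul]
        have : 0 ≤ 1 / (8 * b) * ‖x‖ ^ 2 := by positivity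
        linarith
      nlinarith
    have hl2 : Real.log Cl + -(‖x‖ ^ 2 + R ^ 2) / (2 * a) ≤ Real.log (cv f (hkP n t) x) := by
      rw [← Real.log_exp (-(‖x‖ ^ 2 + R ^ 2) / (2 * a)), ← Real.log_mul hClp.ne' (Real.exp_pos _).ne']
      exact Real.log_le_log (by positivity) hlow
    have h5 : (‖x‖ ^ 2 + R ^ 2) / (2 * a) ≤ (1 + R ^ 2) / (2 * a) * (1 + ‖x‖ ^ 2) := by
      rw [div_mul_eq_mul_div]
      gcongr
      nlinarith [sq_nonneg ‖x‖, sq_nonneg R, mul_nonneg (sq_nonneg ‖x‖) (sq_nonneg R)]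
    have h6 := neg_abs_le (Real.log Cl)
    have h7 := le_abs_self (Real.log Cu)
    have h8 := abs_nonneg (Real.log Cl)
    have h9 := abs_nonneg (Real.log Cu)
    have h10 : 0 ≤ (1 + R ^ 2) / (2 * a) := by positivity
    have h11 : |Real.log Cu| ≤ |Real.log Cu| * (1 + ‖x‖ ^ 2) := le_mul_of_one_le_right h9 hX
    have h12 : |Real.log Cl| ≤ |Real.log Cl| * (1 + ‖x‖ ^ 2) := le_mul_of_one_le_right h8 hX
    have h13 : 0 ≤ (C1 + Cu) * (1 + ‖x‖ ^ 2) := by positivity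
    have h14 : 0 ≤ (1 + R ^ 2) / (2 * a) * (1 + ‖x‖ ^ 2) := by positivity
    have e : (C1 + Cu + C2) * (1 + ‖x‖ ^ 2) = (C1 + Cu) * (1 + ‖x‖ ^ 2) + (|Real.log Cu| * (1 + ‖x‖ ^ 2)
      + |Real.log Cl| * (1 + ‖x‖ ^ 2) + (1 + R ^ 2) / (2 * a) * (1 + ‖x‖ ^ 2)) := by
      rw [hC2]; ring
    rw [neg_div] at hl2
    rw [e, abs_le]
    constructor <;> linarith
  · intro i
    apply cv_bound hf hs hf0 (hkP_cont' n ht) hR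
    intro y hy
    simp only [hkA]
    rw [abs_mul, abs_of_pos (hkP_pos n ht _)]
    have hp := (hkP_pos n ht (x - y)).le
    refine mul_le_mul_of_nonneg_right ?_ hp
    rw [abs_div, abs_neg, abs_of_pos (show 0 < 2 * t by positivity)]
    calc |(x - y) i| / (2 * t) ≤ ((2 + 2 * R ^ 2) * (1 + ‖x‖ ^ 2)) / (2 * a) := by
          have := (coord_le (x - y) i).trans (hz y hy)
          gcongr
      _ = (1 / (2 * a)) * (2 + 2 * R ^ 2) * (1 + ‖x‖ ^ 2) := by ring
      _ ≤ C1 * (1 + ‖x‖ ^ 2) := by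
          rw [hC1]
          gcongr
          have : 0 < 1 / (4 * a ^ 2) := by positivity
          linarith
      _ ≤ _ := by gcongr; linarith
  · intro i
    apply cv_bound hf hs hf0 (hkP_cont' n ht) hR
    intro y hy
    simp only [hkB]
    rw [abs_mul, abs_of_pos (hkP_pos n ht _)]
    have hp := (hkP_pos n ht (x - y)).le
    refine mul_le_mul_of_nonneg_right ?_ hp
    calc |((x - y) i) ^ 2 / (4 * t ^ 2) - 1 / (2 * t)| ≤ |((x - y) i) ^ 2 / (4 * t ^ 2)| + |1 / (2 * t)| := abs_sub _ _
      _ = ((x - y) i) ^ 2 / (4 * t ^ 2) + 1 / (2 * t) := by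
          rw [abs_of_nonneg (by positivity), abs_of_nonneg (by positivity)]
      _ ≤ (1 + ‖x - y‖ ^ 2) / (4 * a ^ 2) + (1 + ‖x - y‖ ^ 2) / (2 * a) := by
          have h1 : ((x - y) i) ^ 2 ≤ 1 + ‖x - y‖ ^ 2 := by linarith [coord_sq_le (x - y) i]
          have h2 : 1 ≤ 1 + ‖x - y‖ ^ 2 := by nlinarith [sq_nonneg ‖x - y‖]
          gcongr
      _ = (1 / (4 * a ^ 2) + 1 / (2 * a)) * (1 + ‖x - y‖ ^ 2) := by ring
      _ ≤ (1 / (4 * a ^ 2) + 1 / (2 * a)) * ((2 + 2 * R ^ 2) * (1 + ‖x‖ ^ 2)) := by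
          have := hz y hy
          gcongr
      _ = C1 * (1 + ‖x‖ ^ 2) := by rw [hC1]; ring
      _ ≤ _ := by gcongr; linarith


/-- Coordinate Fisher information. -/
noncomputable def fishI {n : ℕ} (f : EuclideanSpace ℝ (Fin n) → ℝ) (i : Fin n) (t : ℝ) : ℝ :=
  ∫ x, cv f (hkA n i t) x ^ 2 / cv f (hkP n t) x

section
variable {n : ℕ} {f : EuclideanSpace ℝ (Fin n) → ℝ}

theorem u_pos (hf : Continuous f)
    (hs : HasCompactSupport f) (hf0 : ∀ x, 0 ≤ f x) (hf1 : ∫ x, f x = 1) {t : ℝ} (ht : 0 < t) (x) :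
    0 < cv f (hkP n t) x := by
  obtain ⟨C, c, hC, hc, h⟩ := heat_bounds (n := n) hf hs hf0 hf1 ht le_rfl
  exact (h t le_rfl le_rfl x).1

/-- A function dominated by `C * (1+‖x‖²)² * u` is integrable. -/
theorem int_of_u_bound (hf : Continuous f)
    (hs : HasCompactSupport f) (hf0 : ∀ x, 0 ≤ f x) (hf1 : ∫ x, f x = 1) {t : ℝ} (ht : 0 < t)
    {g : EuclideanSpace ℝ (Fin n) → ℝ} (hg : Continuous g) {D : ℝ} (hD : 0 ≤ D)
    (h : ∀ x, |g x| ≤ D * (1 + ‖x‖ ^ 2) ^ 2 * cv f (hkP n t) x) : Integrable g := by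
  obtain ⟨C, c, hC, hc, hb⟩ := heat_bounds (n := n) hf hs hf0 hf1 ht le_rfl
  refine int_of_bound (C := D * C) hc hg (fun x => (h x).trans ?_)
  have := (hb t le_rfl le_rfl x).2.1
  calc _ ≤ D * (1 + ‖x‖ ^ 2) ^ 2 * (C * Real.exp (-c * ‖x‖ ^ 2)) := by gcongr
    _ = _ := by ring

theorem J_cont (hf : Continuous f)
    (hs : HasCompactSupport f) (hf0 : ∀ x, 0 ≤ f x) (hf1 : ∫ x, f x = 1) (i : Fin n) {t : ℝ} (ht : 0 < t) :
    Continuous (fun x => cv f (hkA n i t) x ^ 2 / cv f (hkP n t) x) :=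
  ((cv_cont hf hs (hkA_cont' n i ht)).pow 2).div (cv_cont hf hs (hkP_cont' n ht))
    (fun x => (u_pos hf hs hf0 hf1 ht x).ne')

theorem J_int (hf : Continuous f)
    (hs : HasCompactSupport f) (hf0 : ∀ x, 0 ≤ f x) (hf1 : ∫ x, f x = 1) (i : Fin n) {t : ℝ} (ht : 0 < t) :
    Integrable (fun x => cv f (hkA n i t) x ^ 2 / cv f (hkP n t) x) := by
  obtain ⟨C, c, hC, hc, hb⟩ := heat_bounds (n := n) hf hs hf0 hf1 ht le_rfl
  refine int_of_u_bound hf hs hf0 hf1 ht (J_cont hf hs hf0 hf1 i ht) (D := C ^ 2) (by positivity) ?_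
  intro x
  obtain ⟨h1, h2, h3, h4, h5⟩ := hb t le_rfl le_rfl x
  rw [abs_of_nonneg (by positivity), div_le_iff₀ h1, ← sq_abs]
  calc _ ≤ (C * (1 + ‖x‖ ^ 2) * cv f (hkP n t) x) ^ 2 := by gcongr; exact h4 i
    _ = _ := by ring

theorem fishI_nonneg (hf : Continuous f)
    (hs : HasCompactSupport f) (hf0 : ∀ x, 0 ≤ f x) (hf1 : ∫ x, f x = 1) (i : Fin n) {t : ℝ} (ht : 0 < t) :
    0 ≤ fishI f i t := by
  apply integral_nonneg
  intro x
  have := u_pos hf hs hf0 hf1 ht x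
  simp only [Pi.zero_apply]
  positivity

theorem fishI_ineq (hf : Continuous f)
    (hs : HasCompactSupport f) (hf0 : ∀ x, 0 ≤ f x) (hf1 : ∫ x, f x = 1) (i : Fin n) {t s : ℝ}
    (ht : 0 < t) (hs0 : 0 < s) {α β : ℝ} (hαβ : α + β = 1) :
    fishI f i (t + s) ≤ α ^ 2 * fishI f i t + β ^ 2 * (1 / (2 * s)) := by
  have hts : 0 < t + s := by positivity
  have hfi : Integrable f := hf.integrable_of_hasCompactSupport hs
  have hP := hkP_int n hs0
  have hA := hkA_int n i hs0
  have hS := hkS_int n i hs0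
  have hu : Integrable (cv f (hkP n t)) := hfi.integrable_convolution _ (hkP_int n ht)
  have hv : Integrable (cv f (hkA n i t)) := hfi.integrable_convolution _ (hkA_int n i ht)
  have hJ := J_int hf hs hf0 hf1 i ht
  set u := cv f (hkP n t) with hu_def
  set v := cv f (hkA n i t) with hv_def
  set J : EuclideanSpace ℝ (Fin n) → ℝ := fun x => v x ^ 2 / u x with hJ_def
  have key : ∀ᵐ x, cv f (hkA n i (t + s)) x ^ 2 / cv f (hkP n (t + s)) x ≤
      α ^ 2 * cv J (hkP n s) x + 2 * α * β * cv v (hkA n i s) x + β ^ 2 * cv u (hkS n i s) x := by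
    filter_upwards [cv_assoc_ae hfi (hkP_int n ht) hP, cv_assoc_ae hfi (hkA_int n i ht) hP,
      cv_assoc_ae hfi (hkP_int n ht) hA,
      hu.ae_convolution_exists (ContinuousLinearMap.mul ℝ ℝ) hP,
      hv.ae_convolution_exists (ContinuousLinearMap.mul ℝ ℝ) hP,
      hu.ae_convolution_exists (ContinuousLinearMap.mul ℝ ℝ) hA,
      hJ.ae_convolution_exists (ContinuousLinearMap.mul ℝ ℝ) hP,
      hv.ae_convolution_exists (ContinuousLinearMap.mul ℝ ℝ) hA,
      hu.ae_convolution_exists (ContinuousLinearMap.mul ℝ ℝ) hS]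
      with x e1 e2 e3 i1 i2 i3 i4 i5 i6
    rw [cv_PP n ht hs0] at e1
    rw [cv_AP n i ht hs0] at e2
    rw [cv_PA n i ht hs0] at e3
    have hU : 0 < cv f (hkP n (t + s)) x := u_pos hf hs hf0 hf1 hts x
    set U := cv f (hkP n (t + s)) x
    set V := cv f (hkA n i (t + s)) x
    replace i1 : Integrable (fun y => u y * hkP n s (x - y)) := i1
    replace i2 : Integrable (fun y => v y * hkP n s (x - y)) := i2
    replace i3 : Integrable (fun y => u y * hkA n i s (x - y)) := i3
    replace i4 : Integrable (fun y => J y * hkP n s (x - y)) := i4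
    replace i5 : Integrable (fun y => v y * hkA n i s (x - y)) := i5
    replace i6 : Integrable (fun y => u y * hkS n i s (x - y)) := i6
    set k := V / U with hk
    have h0 : 0 ≤ ∫ y, (α ^ 2 * (J y * hkP n s (x - y)) + 2 * α * β * (v y * hkA n i s (x - y))
        + β ^ 2 * (u y * hkS n i s (x - y)) + k ^ 2 * (u y * hkP n s (x - y))
        + (-2 * k * α) * (v y * hkP n s (x - y)) + (-2 * k * β) * (u y * hkA n i s (x - y))) := by
      apply integral_nonneg
      intro y
      have hy : 0 < u y := u_pos hf hs hf0 hf1 ht y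
      have hp := hkP_pos n hs0 (x - y)
      have : 0 ≤ u y * hkP n s (x - y) * (α * (v y / u y) + β * (-((x - y) i) / (2 * s)) - k) ^ 2 := by
        positivity
      refine this.trans_eq ?_
      simp only [hJ_def, hkA, hkS]
      field_simp
      ring
    rw [integral_add (((((i4.const_mul _).fun_add (i5.const_mul _)).fun_add (i6.const_mul _)).fun_add
        (i1.const_mul _)).fun_add (i2.const_mul _)) (i3.const_mul _),
      integral_add ((((i4.const_mul _).fun_add (i5.const_mul _)).fun_add (i6.const_mul _)).fun_add
        (i1.const_mul _)) (i2.const_mul _),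
      integral_add (((i4.const_mul _).fun_add (i5.const_mul _)).fun_add (i6.const_mul _)) (i1.const_mul _),
      integral_add ((i4.const_mul _).fun_add (i5.const_mul _)) (i6.const_mul _),
      integral_add (i4.const_mul _) (i5.const_mul _)] at h0
    simp only [integral_const_mul] at h0
    simp only [← cv_apply] at h0
    rw [e1, e2, e3] at h0
    have e4 : k * U = V := by rw [hk]; field_simp
    have e5 : V ^ 2 / U = k * V := by rw [hk]; ring
    have e6 : k ^ 2 * U = k * V := by rw [← e4]; ring
    have e7 : β = 1 - α := by linarith
    rw [e5]
    have e8 : -2 * k * α * V + -2 * k * β * V = -2 * (k * V) := by rw [e7]; ring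
    linarith
  have c1 : Integrable (cv J (hkP n s)) := hJ.integrable_convolution _ hP
  have c2 : Integrable (cv v (hkA n i s)) := hv.integrable_convolution _ hA
  have c3 : Integrable (cv u (hkS n i s)) := hu.integrable_convolution _ hS
  have d1 : ∫ x, cv J (hkP n s) x = fishI f i t := by
    rw [integral_convolution _ hJ hP, hkP_integral n hs0]
    simp [fishI, hJ_def]
    rfl
  have d2 : ∫ x, cv v (hkA n i s) x = 0 := by
    rw [integral_convolution _ hv hA, hkA_integral n i hs0]
    simp
  have d0 : ∫ x, u x = 1 := by
    rw [hu_def, integral_convolution _ hfi (hkP_int n ht), hkP_integral n ht, hf1]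
    simp
  have d3 : ∫ x, cv u (hkS n i s) x = 1 / (2 * s) := by
    rw [integral_convolution _ hu hS, hkS_integral n i hs0, d0]
    simp
  calc fishI f i (t + s) ≤ ∫ x, (α ^ 2 * cv J (hkP n s) x + 2 * α * β * cv v (hkA n i s) x
        + β ^ 2 * cv u (hkS n i s) x) :=
        integral_mono_ae (J_int hf hs hf0 hf1 i hts)
          (((c1.const_mul _).add (c2.const_mul _)).add (c3.const_mul _)) key
    _ = _ := by
        rw [integral_add ((c1.const_mul _).fun_add (c2.const_mul _)) (c3.const_mul _),
          integral_add (c1.const_mul _) (c2.const_mul _), integral_const_mul, integral_const_mul,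
          integral_const_mul, d1, d2, d3]
        ring

theorem fish_total (hn : 1 ≤ n) (hf : Continuous f)
    (hs : HasCompactSupport f) (hf0 : ∀ x, 0 ≤ f x) (hf1 : ∫ x, f x = 1) {t s : ℝ}
    (ht : 0 < t) (hs0 : 0 < s) :
    ∑ i, fishI f i (t + s) ≤ (∑ i, fishI f i t) / (1 + 2 * s * (∑ i, fishI f i t) / n) := by
  have hn0 : (0 : ℝ) < n := by exact_mod_cast hn
  have hI : 0 ≤ ∑ i, fishI f i t := Finset.sum_nonneg fun i _ => fishI_nonneg hf hs hf0 hf1 i ht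
  set I := ∑ i, fishI f i t with hI_def
  have hd : 0 < n + 2 * s * I := by positivity
  have hαβ : n / (n + 2 * s * I) + 2 * s * I / (n + 2 * s * I) = 1 := by field_simp
  calc ∑ i, fishI f i (t + s) ≤ ∑ i, ((n / (n + 2 * s * I)) ^ 2 * fishI f i t +
        (2 * s * I / (n + 2 * s * I)) ^ 2 * (1 / (2 * s))) :=
        Finset.sum_le_sum fun i _ => fishI_ineq hf hs hf0 hf1 i ht hs0 hαβ
    _ = (n / (n + 2 * s * I)) ^ 2 * I + n * ((2 * s * I / (n + 2 * s * I)) ^ 2 * (1 / (2 * s))) := by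
        rw [Finset.sum_add_distrib, ← Finset.mul_sum, ← hI_def]
        simp
    _ = _ := by field_simp

theorem ibp (hf : Continuous f)
    (hs : HasCompactSupport f) (hf0 : ∀ x, 0 ≤ f x) (hf1 : ∫ x, f x = 1) (i : Fin n) {t : ℝ} (ht : 0 < t) :
    Integrable (fun x => (Real.log (cv f (hkP n t) x) + 1) * cv f (hkB n i t) x) ∧
    ∫ x, (Real.log (cv f (hkP n t) x) + 1) * cv f (hkB n i t) x = - fishI f i t := by
  obtain ⟨C, c, hC, hc, hb⟩ := heat_bounds (n := n) hf hs hf0 hf1 ht le_rfl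
  have hup := u_pos (n := n) hf hs hf0 hf1 ht
  have cu := cv_cont hf hs (hkP_cont' n ht)
  have cA := cv_cont hf hs (hkA_cont' n i ht)
  have cB := cv_cont hf hs (hkB_cont' n i ht)
  have cl : Continuous (fun x => Real.log (cv f (hkP n t) x) + 1) :=
    (cu.log (fun x => (hup x).ne')).add continuous_const
  have hl : ∀ x, |Real.log (cv f (hkP n t) x) + 1| ≤ (C + 1) * (1 + ‖x‖ ^ 2) := by
    intro x
    obtain ⟨h1, h2, h3, h4, h5⟩ := hb t le_rfl le_rfl x
    refine (abs_add_le _ _).trans ?_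
    rw [abs_one]
    nlinarith [sq_nonneg ‖x‖]
  have gen : ∀ K : EuclideanSpace ℝ (Fin n) → ℝ, Continuous (cv f K) →
      (∀ x, |cv f K x| ≤ C * (1 + ‖x‖ ^ 2) * cv f (hkP n t) x) →
      Integrable (fun x => (Real.log (cv f (hkP n t) x) + 1) * cv f K x) := by
    intro K hK hKb
    refine int_of_u_bound hf hs hf0 hf1 ht (cl.mul hK) (D := (C + 1) * C) (by positivity) ?_
    intro x
    rw [abs_mul]
    calc _ ≤ ((C + 1) * (1 + ‖x‖ ^ 2)) * (C * (1 + ‖x‖ ^ 2) * cv f (hkP n t) x) := by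
          have := hl x
          have := hKb x
          gcongr
      _ = _ := by ring
  have hB := gen _ cB (fun x => (hb t le_rfl le_rfl x).2.2.2.2 i)
  have hA := gen _ cA (fun x => (hb t le_rfl le_rfl x).2.2.2.1 i)
  refine ⟨hB, ?_⟩
  have hJ := J_int hf hs hf0 hf1 i ht
  have eJ : (fun x => cv f (hkA n i t) x / cv f (hkP n t) x * cv f (hkA n i t) x) =
      fun x => cv f (hkA n i t) x ^ 2 / cv f (hkP n t) x := by
    ext x; ring
  have := integral_bilinear_hasLineDerivAt_right_eq_neg_left_of_integrable
    (μ := (volume : Measure (EuclideanSpace ℝ (Fin n))))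
    (f := fun x => Real.log (cv f (hkP n t) x) + 1)
    (f' := fun x => cv f (hkA n i t) x / cv f (hkP n t) x)
    (g := cv f (hkA n i t)) (g' := cv f (hkB n i t)) (v := EuclideanSpace.single i 1)
    (B := ContinuousLinearMap.mul ℝ ℝ) (by
      simp only [ContinuousLinearMap.mul_apply']
      rw [eJ]; exact hJ) hB hA
    (fun x _ => by
      have h1 := cv_u_line hf hs i ht x
      rw [lineDeriv_iff] at h1 ⊢
      have := (h1.log (by simpa using (hup x).ne')).add_const 1
      simpa using this) (fun x _ => cv_v_line hf hs i ht x)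
  simp only [ContinuousLinearMap.mul_apply'] at this
  rw [this, eJ, fishI]

theorem deBruijn (hf : Continuous f)
    (hs : HasCompactSupport f) (hf0 : ∀ x, 0 ≤ f x) (hf1 : ∫ x, f x = 1) {t : ℝ} (ht : 0 < t) :
    HasDerivAt (fun t => -∫ x, cv f (hkP n t) x * Real.log (cv f (hkP n t) x)) (∑ i, fishI f i t) t := by
  obtain ⟨C, c, hC, hc, hb⟩ := heat_bounds (n := n) hf hs hf0 hf1 (half_pos ht)
    (show t / 2 ≤ 2 * t by linarith)
  have hnhds : Set.Icc (t / 2) (2 * t) ∈ nhds t := Icc_mem_nhds (by linarith) (by linarith)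
  have hcont : ∀ s, 0 < s → Continuous (fun x => cv f (hkP n s) x * Real.log (cv f (hkP n s) x)) := by
    intro s hs0
    have cu := cv_cont hf hs (hkP_cont' n hs0)
    exact cu.mul (cu.log fun x => (u_pos hf hs hf0 hf1 hs0 x).ne')
  have hcont' : Continuous (fun x => (Real.log (cv f (hkP n t) x) + 1) * ∑ i, cv f (hkB n i t) x) := by
    have cu := cv_cont hf hs (hkP_cont' n ht)
    exact ((cu.log fun x => (u_pos hf hs hf0 hf1 ht x).ne').add continuous_const).mul
      (continuous_finsetSum _ fun i _ => cv_cont hf hs (hkB_cont' n i ht))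
  have main := (hasDerivAt_integral_of_dominated_loc_of_deriv_le
    (μ := (volume : Measure (EuclideanSpace ℝ (Fin n))))
    (F := fun s x => cv f (hkP n s) x * Real.log (cv f (hkP n s) x))
    (F' := fun s x => (Real.log (cv f (hkP n s) x) + 1) * ∑ i, cv f (hkB n i s) x)
    (bound := fun x => ((C + 1) * n * C * C) * ((1 + ‖x‖ ^ 2) ^ 2 * Real.exp (-c * ‖x‖ ^ 2)))
    hnhds ?_ ?_ hcont'.aestronglyMeasurable ?_ ?_ ?_).2
  · have e : ∫ x, (Real.log (cv f (hkP n t) x) + 1) * ∑ i, cv f (hkB n i t) x = - ∑ i, fishI f i t := by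
      simp_rw [Finset.mul_sum]
      rw [integral_finsetSum _ (fun i _ => (ibp hf hs hf0 hf1 i ht).1), ← Finset.sum_neg_distrib]
      exact Finset.sum_congr rfl fun i _ => (ibp hf hs hf0 hf1 i ht).2
    rw [e] at main
    simpa using main.fun_neg
  · filter_upwards [hnhds] with s hs'
    exact (hcont s (by linarith [hs'.1])).aestronglyMeasurable
  · refine int_of_u_bound hf hs hf0 hf1 ht (hcont t ht) (D := C) hC.le ?_
    intro x
    obtain ⟨h1, h2, h3, h4, h5⟩ := hb t (by linarith) (by linarith) x
    rw [abs_mul, abs_of_pos h1, mul_comm]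
    have : C * (1 + ‖x‖ ^ 2) ≤ C * (1 + ‖x‖ ^ 2) ^ 2 := by
      gcongr
      nlinarith [sq_nonneg ‖x‖]
    have := h3.trans this
    gcongr
  · refine Filter.Eventually.of_forall fun x s hs' => ?_
    obtain ⟨h1, h2, h3, h4, h5⟩ := hb s hs'.1 hs'.2 x
    rw [norm_mul]
    have b1 : ‖Real.log (cv f (hkP n s) x) + 1‖ ≤ (C + 1) * (1 + ‖x‖ ^ 2) := by
      refine (norm_add_le _ _).trans ?_
      rw [norm_one, Real.norm_eq_abs]
      nlinarith [sq_nonneg ‖x‖]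
    have b2 : ‖∑ i, cv f (hkB n i s) x‖ ≤ n * (C * (1 + ‖x‖ ^ 2) * (C * Real.exp (-c * ‖x‖ ^ 2))) := by
      refine (norm_sum_le _ _).trans ?_
      calc _ ≤ ∑ i : Fin n, (C * (1 + ‖x‖ ^ 2) * (C * Real.exp (-c * ‖x‖ ^ 2))) := by
            apply Finset.sum_le_sum
            intro i _
            refine (h5 i).trans ?_
            gcongr
        _ = _ := by simp
    calc _ ≤ ((C + 1) * (1 + ‖x‖ ^ 2)) * (n * (C * (1 + ‖x‖ ^ 2) * (C * Real.exp (-c * ‖x‖ ^ 2)))) := by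
          gcongr
      _ = _ := by ring
  · exact (poly_gauss_int n hc).const_mul _
  · refine Filter.Eventually.of_forall fun x s hs' => ?_
    have hs0 : 0 < s := by linarith [hs'.1]
    exact (Real.hasDerivAt_mul_log (u_pos hf hs hf0 hf1 hs0 x).ne').comp s (cv_u_dt hf hs hs0 x)

end

/-- Concavity of the Shannon entropy power along the heat flow on `ℝⁿ`. -/
theorem entropyPower_concave (n : ℕ) (hn : 1 ≤ n)
    (f : EuclideanSpace ℝ (Fin n) → ℝ)
    (hf_cont : Continuous f) (hf_nonneg : ∀ x, 0 ≤ f x)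
    (hf_supp : HasCompactSupport f)
    (hf_int : ∫ x, f x = 1) :
    ∀ t₁ t₂ : ℝ, 0 < t₁ → t₁ ≤ t₂ → ∀ l : ℝ, 0 ≤ l → l ≤ 1 →
      l * entropyPower n f t₁ + (1 - l) * entropyPower n f t₂ ≤
        entropyPower n f (l * t₁ + (1 - l) * t₂) := by
  have hu : ∀ t x, heatSol n f t x = cv f (hkP n t) x := by
    intro t x
    rw [heatSol, cv_apply]
    congr 1
    ext y
    simp only [hkP]
    ring
  have hH : shannonEntropy n f =
      fun t => -∫ x, cv f (hkP n t) x * Real.log (cv f (hkP n t) x) := by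
    ext t
    simp only [shannonEntropy, hu]
  have hconc := ep_ode n hn (shannonEntropy n f) (fun t => ∑ i, fishI f i t)
    (fun t ht => by
      rw [hH]
      exact deBruijn hf_cont hf_supp hf_nonneg hf_int ht)
    (fun t ht => Finset.sum_nonneg fun i _ =>
      fishI_nonneg hf_cont hf_supp hf_nonneg hf_int i ht)
    (fun t s ht hs => fish_total hn hf_cont hf_supp hf_nonneg hf_int ht hs)
  intro t₁ t₂ h1 h12 l hl0 hl1
  have := hconc.2 (Set.mem_Ioi.2 h1) (Set.mem_Ioi.2 (h1.trans_le h12)) hl0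
    (show 0 ≤ 1 - l by linarith) (by ring)
  simpa only [smul_eq_mul, entropyPower] using this
end

section
/- Let n ≥ 1 and let f : ℝⁿ → ℝ be a nonnegative, continuous, compactly supported function with ∫_{ℝⁿ} f dx = 1, and let u(t,x) = ∫_{ℝⁿ} (4πt)^{-n/2} exp(-‖x-y‖²/(4t)) f(y) dy. Then the function t ↦ H(u(t)) = -∫_{ℝⁿ} u(t,x) log u(t,x) dx is twice differentiable on (0,∞) and satisfies the entropy differential inequality H''(t) + (2/n) H'(t)² ≤ 0 for all t > 0. -/
open Real MeasureTheory

namespace EDI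

/-- Euclidean space. -/
abbrev E (n : ℕ) := EuclideanSpace ℝ (Fin n)

/-- Continuous with compact support. -/
def CS {n : ℕ} (g : E n → ℝ) : Prop := Continuous g ∧ HasCompactSupport g

/-- exponential moments -/
noncomputable def M {n : ℕ} (g : E n → ℝ) (s : ℝ) (z : E n) : ℝ :=
  ∫ y, Real.exp (inner ℝ z y - s * ‖y‖ ^ 2) * g y

/-- multiplication by coordinate -/
def mc {n : ℕ} (i : Fin n) (g : E n → ℝ) : E n → ℝ := fun y => y i * g y

/-- the heat kernel -/
noncomputable def gam {n : ℕ} (s : ℝ) (z : E n) : ℝ :=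
  (4 * π * s) ^ (-(n : ℝ) / 2) * Real.exp (-‖z‖ ^ 2 / (4 * s))

/-- Locally uniform exponential growth. -/
def Nice {n : ℕ} (G : ℝ → E n → ℝ) : Prop :=
  (∀ s, 0 < s → Continuous (G s)) ∧
  ∀ S, 0 < S → ∃ C a : ℝ, 0 ≤ C ∧ 0 ≤ a ∧ ∀ s, 0 < s → s ≤ S → ∀ z, |G s z| ≤ C * Real.exp (a * ‖z‖)

variable {n : ℕ}

lemma CS.mc {g : E n → ℝ} (hg : CS g) (i : Fin n) : CS (mc i g) := by
  refine ⟨?_, ?_⟩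
  · have := hg.1
    unfold EDI.mc
    fun_prop
  · exact hg.2.mul_left (f := fun y : E n => y i)

lemma CS.integrable_mul {g : E n → ℝ} (hg : CS g) {a : E n → ℝ} (ha : Continuous a) :
    Integrable (fun y => a y * g y) := by
  have := hg.1
  exact Continuous.integrable_of_hasCompactSupport (by fun_prop) (hg.2.mul_left (f := a))

lemma CS.integrable {g : E n → ℝ} (hg : CS g) : Integrable g :=
  hg.1.integrable_of_hasCompactSupport hg.2

lemma CS.radius {g : E n → ℝ} (hg : CS g) : ∃ R : ℝ, 0 ≤ R ∧ ∀ y, g y ≠ 0 → ‖y‖ ≤ R := by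
  obtain ⟨R, hR⟩ := hg.2.isBounded.subset_closedBall (0 : E n)
  refine ⟨max R 0, le_max_right _ _, fun y hy => ?_⟩
  have := hR (subset_tsupport g hy)
  simp at this
  exact this.trans (le_max_left _ _)

lemma exp_deriv {g : E n → ℝ} (hg : CS g) {a b : E n → ℝ} (ha : Continuous a)
    (hb : Continuous b) (h₀ : ℝ) :
    HasDerivAt (fun h => ∫ y, Real.exp (a y + h * b y) * g y)
      (∫ y, Real.exp (a y + h₀ * b y) * (b y * g y)) h₀ := by
  have hgc := hg.1
  have hga : CS (fun y => |g y|) := ⟨hgc.abs, hg.2.comp_left abs_zero⟩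
  refine (hasDerivAt_integral_of_dominated_loc_of_deriv_le
    (F' := fun h y => Real.exp (a y + h * b y) * (b y * g y))
    (bound := fun y => (Real.exp (a y + (|h₀| + 1) * |b y|) * |b y|) * |g y|)
    (Metric.ball_mem_nhds h₀ one_pos) ?_ ?_ ?_ ?_ ?_ ?_).2
  · exact Filter.Eventually.of_forall fun h =>
      (hg.integrable_mul (a := fun y => Real.exp (a y + h * b y)) (by fun_prop)).aestronglyMeasurable
  · exact hg.integrable_mul (a := fun y => Real.exp (a y + h₀ * b y)) (by fun_prop)
  · exact Continuous.aestronglyMeasurable (by fun_prop)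
  · refine Filter.Eventually.of_forall fun y h hh => ?_
    rw [Real.norm_eq_abs, abs_mul, abs_mul, abs_of_pos (Real.exp_pos _), mul_assoc]
    rw [Metric.mem_ball, Real.dist_eq] at hh
    have : |h| ≤ |h₀| + 1 := by
      have := abs_sub_abs_le_abs_sub h h₀
      linarith
    have h3 : h * b y ≤ (|h₀| + 1) * |b y| := by
      calc h * b y ≤ |h * b y| := le_abs_self _
        _ = |h| * |b y| := abs_mul _ _
        _ ≤ _ := by gcongr
    have h4 : Real.exp (a y + h * b y) ≤ Real.exp (a y + (|h₀| + 1) * |b y|) :=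
      Real.exp_le_exp.2 (by linarith)
    exact mul_le_mul_of_nonneg_right h4 (by positivity)
  · exact hga.integrable_mul (a := fun y => Real.exp (a y + (|h₀| + 1) * |b y|) * |b y|) (by fun_prop)
  · refine Filter.Eventually.of_forall fun y h _ => ?_
    have h1 : HasDerivAt (fun h => a y + h * b y) (b y) h := by
      simpa using ((hasDerivAt_id h).mul_const (b y)).const_add (a y)
    simpa [mul_assoc] using h1.exp.mul_const (g y)

lemma M_integrable {g : E n → ℝ} (hg : CS g) (s : ℝ) (z : E n) :
    Integrable fun y => Real.exp (inner ℝ z y - s * ‖y‖ ^ 2) * g y :=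
  hg.integrable_mul (a := fun y => Real.exp (inner ℝ z y - s * ‖y‖ ^ 2)) (by fun_prop)

lemma M_time {g : E n → ℝ} (hg : CS g) (s : ℝ) (z : E n) :
    HasDerivAt (fun s => M g s z) (-∑ j, M (mc j (mc j g)) s z) s := by
  have := exp_deriv hg (a := fun y => inner ℝ z y) (b := fun y => -‖y‖ ^ 2)
    (by fun_prop) (by fun_prop) s
  convert this using 1
  · ext s; unfold M; congr 1; ext y; congr 2; ring
  · unfold M
    rw [← integral_finsetSum _ fun j _ => M_integrable ((hg.mc j).mc j) s z, ← integral_neg]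
    congr 1; ext y
    rw [← Finset.mul_sum]
    have : ∑ j, mc j (mc j g) y = ‖y‖ ^ 2 * g y := by
      rw [EuclideanSpace.real_norm_sq_eq, Finset.sum_mul]
      refine Finset.sum_congr rfl fun j _ => ?_
      simp only [mc]; ring
    rw [this]
    rw [show inner ℝ z y + s * -‖y‖ ^ 2 = inner ℝ z y - s * ‖y‖ ^ 2 by ring]; ring

lemma M_line {g : E n → ℝ} (hg : CS g) (s : ℝ) (z : E n) (i : Fin n) :
    HasLineDerivAt ℝ (M g s) (M (mc i g) s z) z (EuclideanSpace.single i 1) := by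
  have := exp_deriv hg (a := fun y => inner ℝ z y - s * ‖y‖ ^ 2) (b := fun y => y i)
    (by fun_prop) (by fun_prop) 0
  unfold HasLineDerivAt
  convert! this using 1
  · ext h; unfold M; congr 1; ext y; congr 2
    rw [inner_add_left, inner_smul_left, EuclideanSpace.inner_single_left]; simp; ring
  · simp [M, mc]

lemma M_cont {g : E n → ℝ} (hg : CS g) (s : ℝ) : Continuous (M g s) := by
  have hgc := hg.1
  have := continuous_parametric_integral_of_continuous (μ := volume)
    (f := fun z y : E n => Real.exp (inner ℝ z y - s * ‖y‖ ^ 2) * g y)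
    (by simp only [Function.uncurry_def]; fun_prop) hg.2
  convert this using 2 with z
  unfold M
  rw [setIntegral_eq_integral_of_forall_compl_eq_zero]
  intro y hy
  rw [image_eq_zero_of_notMem_tsupport hy, mul_zero]

lemma M_bound {g : E n → ℝ} (hg : CS g) : ∃ C R : ℝ, 0 ≤ C ∧ 0 ≤ R ∧
    ∀ s, 0 < s → ∀ z, |M g s z| ≤ C * Real.exp (R * ‖z‖) := by
  obtain ⟨R, hR, h⟩ := hg.radius
  refine ⟨∫ y, |g y|, R, integral_nonneg fun _ => abs_nonneg _, hR, fun s hs z => ?_⟩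
  rw [mul_comm, ← integral_const_mul]
  unfold M
  refine (abs_integral_le_integral_abs).trans (integral_mono ?_ ?_ fun y => ?_)
  · exact (M_integrable hg s z).abs
  · exact (hg.integrable.abs).const_mul _
  · dsimp only
    by_cases hy : g y = 0
    · simp [hy]
    rw [abs_mul, abs_of_pos (Real.exp_pos _)]
    gcongr
    have h1 : inner ℝ z y ≤ ‖z‖ * ‖y‖ := real_inner_le_norm z y
    have h2 : ‖z‖ * ‖y‖ ≤ ‖z‖ * R := by gcongr; exact h y hy
    have : 0 ≤ s * ‖y‖ ^ 2 := by positivity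
    linarith

lemma M_nice {g : E n → ℝ} (hg : CS g) : Nice (M g) := by
  obtain ⟨C, R, hC, hR, h⟩ := M_bound hg
  exact ⟨fun s _ => M_cont hg s, fun S _ => ⟨C, R, hC, hR, fun s hs _ z => h s hs z⟩⟩

lemma M_lower {f : E n → ℝ} (hf : CS f) (h0 : ∀ x, 0 ≤ f x) (h1 : ∫ x, f x = 1) :
    ∃ R : ℝ, 0 ≤ R ∧ ∀ s, 0 < s → ∀ z, Real.exp (-(R * ‖z‖) - s * R ^ 2) ≤ M f s z := by
  obtain ⟨R, hR, h⟩ := hf.radius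
  refine ⟨R, hR, fun s hs z => ?_⟩
  rw [← mul_one (Real.exp _), ← h1, ← integral_const_mul]
  refine integral_mono (hf.integrable.const_mul _) (M_integrable hf s z) fun y => ?_
  dsimp only
  by_cases hy : f y = 0
  · simp [hy]
  have := h0 y
  gcongr
  · have h1 : -(‖z‖ * ‖y‖) ≤ inner ℝ z y := neg_le_of_abs_le (abs_real_inner_le_norm z y)
    have h2 : ‖z‖ * ‖y‖ ≤ ‖z‖ * R := by gcongr; exact h y hy
    linarith
  · exact h y hy

lemma Nice.add {F G : ℝ → E n → ℝ} (hF : Nice F) (hG : Nice G) :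
    Nice (fun s z => F s z + G s z) := by
  refine ⟨fun s hs => (hF.1 s hs).add (hG.1 s hs), fun S hS => ?_⟩
  obtain ⟨C, a, hC, ha, h⟩ := hF.2 S hS
  obtain ⟨D, b, hD, hb, k⟩ := hG.2 S hS
  refine ⟨C + D, a + b, by positivity, by positivity, fun s hs hsS z => ?_⟩
  refine (abs_add_le _ _).trans ?_
  rw [add_mul]
  refine add_le_add ((h s hs hsS z).trans ?_) ((k s hs hsS z).trans ?_)
  · gcongr; linarith
  · gcongr; linarith

lemma Nice.mul {F G : ℝ → E n → ℝ} (hF : Nice F) (hG : Nice G) :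
    Nice (fun s z => F s z * G s z) := by
  refine ⟨fun s hs => (hF.1 s hs).mul (hG.1 s hs), fun S hS => ?_⟩
  obtain ⟨C, a, hC, ha, h⟩ := hF.2 S hS
  obtain ⟨D, b, hD, hb, k⟩ := hG.2 S hS
  refine ⟨C * D, a + b, by positivity, by positivity, fun s hs hsS z => ?_⟩
  rw [abs_mul, add_mul, Real.exp_add]
  calc _ ≤ (C * Real.exp (a * ‖z‖)) * (D * Real.exp (b * ‖z‖)) :=
        mul_le_mul (h s hs hsS z) (k s hs hsS z) (abs_nonneg _) (by positivity)
    _ = _ := by ring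

lemma Nice.const (c : ℝ) : Nice (fun _ (_ : E n) => c) :=
  ⟨fun s _ => continuous_const, fun S _ => ⟨|c|, 0, abs_nonneg _, le_rfl, by simp⟩⟩

lemma Nice.coord (i : Fin n) : Nice (fun _ (z : E n) => z i) := by
  refine ⟨fun s _ => by fun_prop, fun S _ => ⟨1, 1, by simp, by simp, fun s _ _ z => ?_⟩⟩
  have h1 : |z i| ≤ ‖z‖ := by simpa using PiLp.norm_apply_le z i
  have := Real.add_one_le_exp (1 * ‖z‖)
  linarith

lemma Nice.normSq : Nice (fun _ (z : E n) => ‖z‖ ^ 2) := by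
  refine ⟨fun s _ => by fun_prop, fun S _ => ⟨2, 1, by simp, by simp, fun s _ _ z => ?_⟩⟩
  have := Real.quadratic_le_exp_of_nonneg (norm_nonneg z)
  rw [abs_of_nonneg (by positivity), one_mul]
  have := norm_nonneg z
  linarith

lemma Nice.neg {F : ℝ → E n → ℝ} (hF : Nice F) : Nice (fun s z => -F s z) := by
  simpa using (Nice.const (-1)).mul hF

lemma Nice.sub {F G : ℝ → E n → ℝ} (hF : Nice F) (hG : Nice G) :
    Nice (fun s z => F s z - G s z) := by
  simpa [sub_eq_add_neg] using hF.add hG.neg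

lemma Nice.pow {F : ℝ → E n → ℝ} (hF : Nice F) (k : ℕ) : Nice (fun s z => F s z ^ k) := by
  induction k with
  | zero => simpa using Nice.const 1
  | succ k ih => simpa [pow_succ] using ih.mul hF

lemma Nice.sum {ι : Type*} (t : Finset ι) {F : ι → ℝ → E n → ℝ} (hF : ∀ i, Nice (F i)) :
    Nice (fun s z => ∑ i ∈ t, F i s z) := by
  classical
  induction t using Finset.induction_on with
  | empty => simpa using Nice.const 0
  | insert a t ha ih => simpa [Finset.sum_insert ha] using (hF a).add ih


lemma M_pos {f : E n → ℝ} (hf : CS f) (h0 : ∀ x, 0 ≤ f x) (h1 : ∫ x, f x = 1)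
    {s : ℝ} (hs : 0 < s) (z : E n) : 0 < M f s z := by
  obtain ⟨R, hR, h⟩ := M_lower hf h0 h1
  exact (Real.exp_pos _).trans_le (h s hs z)

lemma M_inv_nice {f : E n → ℝ} (hf : CS f) (h0 : ∀ x, 0 ≤ f x) (h1 : ∫ x, f x = 1)
    : Nice (fun s z => (M f s z)⁻¹) := by
  obtain ⟨R, hR, h⟩ := M_lower hf h0 h1
  refine ⟨fun s hs => (M_cont hf s).inv₀ fun z => (M_pos hf h0 h1 hs z).ne', fun S hS =>
    ⟨Real.exp (S * R ^ 2), R, by positivity, hR, fun s hs hsS z => ?_⟩⟩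
  have hp := M_pos hf h0 h1 hs z
  rw [abs_of_pos (by positivity), ← Real.exp_add]
  refine (inv_anti₀ (Real.exp_pos _) (h s hs z)).trans ?_
  rw [← Real.exp_neg]
  gcongr
  have : s * R ^ 2 ≤ S * R ^ 2 := by gcongr
  linarith

lemma M_log_nice {f : E n → ℝ} (hf : CS f) (h0 : ∀ x, 0 ≤ f x) (h1 : ∫ x, f x = 1)
    : Nice (fun s z => Real.log (M f s z)) := by
  have hN := (M_nice hf).add (M_inv_nice hf h0 h1)
  refine ⟨fun s hs => (M_cont hf s).log fun z => (M_pos hf h0 h1 hs z).ne', fun S hS => ?_⟩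
  obtain ⟨C, a, hC, ha, h⟩ := hN.2 S hS
  refine ⟨C, a, hC, ha, fun s hs hsS z => le_trans ?_ (h s hs hsS z)⟩
  have hp := M_pos hf h0 h1 hs z
  have hi : 0 < (M f s z)⁻¹ := by positivity
  rw [abs_of_pos (add_pos hp hi)]
  have e1 := Real.log_le_sub_one_of_pos hp
  have e2 := Real.log_le_sub_one_of_pos hi
  rw [Real.log_inv] at e2
  exact abs_le.2 ⟨by linarith, by linarith⟩

lemma gauss_integrable {b : ℝ} (hb : 0 < b) (a : ℝ) :
    Integrable (fun z : E n => Real.exp (-(b * ‖z‖ ^ 2)) * Real.exp (a * ‖z‖)) := by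
  have h1 : Integrable (fun z : E n => Real.exp (-(b / 2) * ‖z‖ ^ 2)) := by
    apply Integrable.of_integral_ne_zero
    rw [GaussianFourier.integral_rexp_neg_mul_sq_norm (by positivity)]
    positivity
  refine (h1.const_mul (Real.exp (a ^ 2 / (2 * b)))).mono'
    (Continuous.aestronglyMeasurable (by fun_prop)) (Filter.Eventually.of_forall fun z => ?_)
  rw [Real.norm_eq_abs, abs_of_pos (by positivity), ← Real.exp_add, ← Real.exp_add]
  apply Real.exp_le_exp.2
  have h2 : 0 ≤ (b * ‖z‖ - a) ^ 2 / (2 * b) := by positivity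
  have h3 : (b * ‖z‖ - a) ^ 2 / (2 * b) = b / 2 * ‖z‖ ^ 2 - a * ‖z‖ + a ^ 2 / (2 * b) := by
    field_simp; ring
  linarith

lemma gam_pos {s : ℝ} (hs : 0 < s) (z : E n) : 0 < gam s z := by
  unfold gam; positivity

lemma gam_cont (s : ℝ) : Continuous (gam (n := n) s) := by
  unfold gam; fun_prop

lemma gam_mul_integrable {s : ℝ} (hs : 0 < s) {F : E n → ℝ} (hF : Continuous F) {C a : ℝ}
    (h : ∀ z, |F z| ≤ C * Real.exp (a * ‖z‖)) : Integrable (fun z => gam s z * F z) := by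
  have h1 := (gauss_integrable (n := n) (b := 1 / (4 * s)) (by positivity) a).const_mul
    ((4 * π * s) ^ (-(n : ℝ) / 2) * C)
  refine h1.mono' ((gam_cont s).mul hF).aestronglyMeasurable
    (Filter.Eventually.of_forall fun z => ?_)
  rw [Real.norm_eq_abs, abs_mul, abs_of_pos (gam_pos hs z)]
  refine (mul_le_mul_of_nonneg_left (h z) (gam_pos hs z).le).trans (le_of_eq ?_)
  unfold gam
  rw [show -‖z‖ ^ 2 / (4 * s) = -(1 / (4 * s) * ‖z‖ ^ 2) by ring]
  ring

lemma Nice.integrable {F : ℝ → E n → ℝ} (hF : Nice F) {s : ℝ} (hs : 0 < s) :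
    Integrable (fun z => gam s z * F s z) := by
  obtain ⟨C, a, _, _, h⟩ := hF.2 s hs
  exact gam_mul_integrable hs (hF.1 s hs) (h s hs le_rfl)

/-- freeze the time -/
lemma Nice.freeze {F : ℝ → E n → ℝ} (hF : Nice F) {s : ℝ} (hs : 0 < s) :
    Nice (fun _ z => F s z) := by
  obtain ⟨C, a, hC, ha, h⟩ := hF.2 s hs
  exact ⟨fun _ _ => hF.1 s hs, fun S hS => ⟨C, a, hC, ha, fun _ _ _ => h s hs le_rfl⟩⟩

lemma gam_line {s : ℝ} (hs : 0 < s) (z : E n) (i : Fin n) :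
    HasLineDerivAt ℝ (gam s) (gam s z * (-(1 / (2 * s)) * z i)) z (EuclideanSpace.single i 1) := by
  have h1 : HasFDerivAt (fun z : E n => ‖z‖ ^ 2) (2 • innerSL ℝ z) z := by
    simpa using (hasStrictFDerivAt_norm_sq z).hasFDerivAt
  have h2 := h1.hasLineDerivAt (EuclideanSpace.single i 1)
  unfold HasLineDerivAt at h2 ⊢
  unfold gam
  have h3 := ((h2.neg.div_const (4 * s)).exp).const_mul ((4 * π * s) ^ (-(n : ℝ) / 2))
  convert! h3 using 1
  simp [EuclideanSpace.inner_single_right]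
  field_simp
  norm_num

lemma gam_line2 {s : ℝ} (hs : 0 < s) (z : E n) (i : Fin n) :
    HasLineDerivAt ℝ (fun z => gam s z * (-(1 / (2 * s)) * z i))
      (gam s z * ((z i) ^ 2 / (4 * s ^ 2) - 1 / (2 * s))) z (EuclideanSpace.single i 1) := by
  have h1 := gam_line hs z i
  have h2 : HasLineDerivAt ℝ (fun z : E n => -(1 / (2 * s)) * z i) (-(1 / (2 * s))) z
      (EuclideanSpace.single i 1) := by
    unfold HasLineDerivAt
    have := (((hasDerivAt_id (0 : ℝ)).const_add (z i))).const_mul (-(1 / (2 * s)))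
    convert! this using 1
    · ext t; simp
    · simp
  unfold HasLineDerivAt at *
  have h3 := h1.mul h2
  convert! h3 using 1
  simp
  field_simp
  ring

lemma ibp1 {s : ℝ} (hs : 0 < s) (i : Fin n) {p p' F F' : E n → ℝ}
    (hp : ∀ z, HasLineDerivAt ℝ (fun z => gam s z * p z) (gam s z * p' z) z
      (EuclideanSpace.single i 1))
    (hF : ∀ z, HasLineDerivAt ℝ F (F' z) z (EuclideanSpace.single i 1))
    (n1 : Nice fun _ => p) (n2 : Nice fun _ => p') (n3 : Nice fun _ => F) (n4 : Nice fun _ => F') :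
    ∫ z, gam s z * (p' z * F z) = -∫ z, gam s z * (p z * F' z) := by
  have i1 := (n2.mul n3).integrable hs
  have i2 := (n1.mul n4).integrable hs
  have i3 := (n1.mul n3).integrable hs
  have := integral_bilinear_hasLineDerivAt_right_eq_neg_left_of_integrable (μ := volume)
    (B := ContinuousLinearMap.mul ℝ ℝ) (f := fun z => gam s z * p z)
    (f' := fun z => gam s z * p' z) (g := F) (g' := F') (v := EuclideanSpace.single i 1)
    (by simpa [mul_assoc] using i1) (by simpa [mul_assoc] using i2) (by simpa [mul_assoc] using i3)
    (fun z _ => hp z) (fun z _ => hF z)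
  simp only [ContinuousLinearMap.mul_apply', mul_assoc] at this
  rw [this, neg_neg]

lemma ibp {s : ℝ} (hs : 0 < s) (i : Fin n) {F F1 F2 : E n → ℝ}
    (hF : ∀ z, HasLineDerivAt ℝ F (F1 z) z (EuclideanSpace.single i 1))
    (hF1 : ∀ z, HasLineDerivAt ℝ F1 (F2 z) z (EuclideanSpace.single i 1))
    (n0 : Nice fun _ => F) (n1 : Nice fun _ => F1) (n2 : Nice fun _ => F2) :
    ∫ z, gam s z * (((z i) ^ 2 / (4 * s ^ 2) - 1 / (2 * s)) * F z) = ∫ z, gam s z * F2 z := by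
  have nc : Nice (fun _ (z : E n) => -(1 / (2 * s)) * z i) := (Nice.const _).mul (Nice.coord i)
  have nd : Nice (fun _ (z : E n) => (z i) ^ 2 / (4 * s ^ 2) - 1 / (2 * s)) := by
    have := (((Nice.coord i).pow 2).mul (Nice.const (1 / (4 * s ^ 2)))).sub (Nice.const (1 / (2 * s)))
    simpa [div_eq_mul_inv] using this
  rw [ibp1 hs i (fun z => gam_line2 hs z i) hF nc nd n0 n1]
  have h1 : ∀ z : E n, HasLineDerivAt ℝ (fun z => gam s z * 1) (gam s z * (-(1 / (2 * s)) * z i)) z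
      (EuclideanSpace.single i 1) := by
    intro z; simpa using gam_line hs z i
  rw [ibp1 hs i h1 hF1 (Nice.const 1) nc n1 n2]
  simp

lemma gam_time {s : ℝ} (hs : 0 < s) (z : E n) :
    HasDerivAt (fun s => gam s z) (gam s z * (‖z‖ ^ 2 / (4 * s ^ 2) - n / (2 * s))) s := by
  unfold gam
  have h1 : HasDerivAt (fun s : ℝ => 4 * π * s) (4 * π) s := by
    simpa using (hasDerivAt_id s).const_mul (4 * π)
  have h2 := h1.rpow_const (p := -(n : ℝ) / 2) (Or.inl (by positivity))
  have h3 : HasDerivAt (fun s : ℝ => -‖z‖ ^ 2 / (4 * s)) (‖z‖ ^ 2 / (4 * s ^ 2)) s := by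
    have := (((hasDerivAt_id s).const_mul 4).inv (by simp; positivity)).const_mul (-‖z‖ ^ 2)
    convert! this using 1
    simp; field_simp
  convert! h2.mul h3.exp using 1
  rw [Real.rpow_sub_one (by positivity)]
  field_simp
  ring

lemma time_deriv {F Fs : ℝ → E n → ℝ} (nF : Nice F) (nFs : Nice Fs)
    (hd : ∀ s, 0 < s → ∀ z, HasDerivAt (fun s => F s z) (Fs s z) s) {s : ℝ} (hs : 0 < s) :
    HasDerivAt (fun s => ∫ z, gam s z * F s z)
      (∫ z, gam s z * ((‖z‖ ^ 2 / (4 * s ^ 2) - n / (2 * s)) * F s z + Fs s z)) s := by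
  obtain ⟨C1, a1, hC1, ha1, b1⟩ := (Nice.normSq.mul nF).2 (2 * s) (by positivity)
  obtain ⟨C2, a2, hC2, ha2, b2⟩ := nF.2 (2 * s) (by positivity)
  obtain ⟨C3, a3, hC3, ha3, b3⟩ := nFs.2 (2 * s) (by positivity)
  have hball : ∀ r ∈ Metric.ball s (s / 2), s / 2 < r ∧ r ≤ 2 * s := by
    intro r hr
    rw [Metric.mem_ball, Real.dist_eq, abs_lt] at hr
    constructor <;> linarith
  refine (hasDerivAt_integral_of_dominated_loc_of_deriv_le
    (F' := fun s z => gam s z * ((‖z‖ ^ 2 / (4 * s ^ 2) - n / (2 * s)) * F s z + Fs s z))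
    (bound := fun z => (4 * π * (s / 2)) ^ (-(n : ℝ) / 2) *
      (1 / s ^ 2 * C1 * (Real.exp (-(1 / (8 * s) * ‖z‖ ^ 2)) * Real.exp (a1 * ‖z‖)) +
       n / s * C2 * (Real.exp (-(1 / (8 * s) * ‖z‖ ^ 2)) * Real.exp (a2 * ‖z‖)) +
       C3 * (Real.exp (-(1 / (8 * s) * ‖z‖ ^ 2)) * Real.exp (a3 * ‖z‖))))
    (Metric.ball_mem_nhds s (half_pos hs)) ?_ (nF.integrable hs) ?_ ?_ ?_ ?_).2
  · filter_upwards [lt_mem_nhds hs] with r hr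
    exact ((gam_cont r).mul (nF.1 r hr)).aestronglyMeasurable
  · have := nF.1 s hs
    have := nFs.1 s hs
    have := gam_cont (n := n) s
    exact Continuous.aestronglyMeasurable (by fun_prop)
  · refine Filter.Eventually.of_forall fun z r hr => ?_
    obtain ⟨hr1, hr2⟩ := hball r hr
    have hr0 : 0 < r := by linarith
    have e1 := b1 r hr0 hr2 z
    have e2 := b2 r hr0 hr2 z
    have e3 := b3 r hr0 hr2 z
    rw [Real.norm_eq_abs, abs_mul, abs_of_pos (gam_pos hr0 z)]
    have g1 : gam r z ≤ (4 * π * (s / 2)) ^ (-(n : ℝ) / 2) * Real.exp (-(1 / (8 * s) * ‖z‖ ^ 2)) := by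
      unfold gam
      gcongr ?_ * Real.exp ?_
      · apply Real.rpow_le_rpow_of_nonpos (by positivity) (by gcongr)
        have : (0 : ℝ) ≤ n := by positivity
        linarith
      · rw [neg_div, neg_le_neg_iff, div_mul_eq_mul_div, one_mul]
        exact div_le_div_of_nonneg_left (by positivity) (by positivity) (by linarith)
    have g2 : |(‖z‖ ^ 2 / (4 * r ^ 2) - n / (2 * r)) * F r z + Fs r z| ≤
        1 / s ^ 2 * (C1 * Real.exp (a1 * ‖z‖)) + n / s * (C2 * Real.exp (a2 * ‖z‖))
          + C3 * Real.exp (a3 * ‖z‖) := by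
      have q1 : 1 / (4 * r ^ 2) ≤ 1 / s ^ 2 := by
        gcongr
        nlinarith
      have q2 : n / (2 * r) ≤ n / s := by
        gcongr
        linarith
      have q3 : (‖z‖ ^ 2 / (4 * r ^ 2) - n / (2 * r)) * F r z + Fs r z =
        1 / (4 * r ^ 2) * (‖z‖ ^ 2 * F r z) + (-(n / (2 * r) * F r z)) + Fs r z := by ring
      rw [q3]
      refine (abs_add_three _ _ _).trans ?_
      rw [abs_neg, abs_mul, abs_mul (n / (2 * r)), abs_of_nonneg (a := 1 / (4 * r ^ 2)) (by positivity),
        abs_of_nonneg (a := n / (2 * r)) (by positivity)]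
      gcongr
    refine (mul_le_mul g1 g2 (abs_nonneg _) (by positivity)).trans (le_of_eq ?_)
    ring
  · have k := fun a => gauss_integrable (n := n) (b := 1 / (8 * s)) (by positivity) a
    exact ((((k a1).const_mul _).add ((k a2).const_mul _)).add ((k a3).const_mul _)).const_mul _
  · refine Filter.Eventually.of_forall fun z r hr => ?_
    obtain ⟨hr1, hr2⟩ := hball r hr
    have hr0 : 0 < r := by linarith
    convert! (gam_time hr0 z).mul (hd r hr0 z) using 1
    ring

lemma lap {s : ℝ} (hs : 0 < s) {F : E n → ℝ} {F1 F2 : Fin n → E n → ℝ}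
    (hF : ∀ i z, HasLineDerivAt ℝ F (F1 i z) z (EuclideanSpace.single i 1))
    (hF1 : ∀ i z, HasLineDerivAt ℝ (F1 i) (F2 i z) z (EuclideanSpace.single i 1))
    (n0 : Nice fun _ => F) (n1 : ∀ i, Nice fun _ => F1 i) (n2 : ∀ i, Nice fun _ => F2 i) :
    ∫ z, gam s z * ((‖z‖ ^ 2 / (4 * s ^ 2) - n / (2 * s)) * F z) =
      ∫ z, gam s z * ∑ i, F2 i z := by
  have h1 : ∀ z : E n, gam s z * ((‖z‖ ^ 2 / (4 * s ^ 2) - n / (2 * s)) * F z) =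
      ∑ i, gam s z * (((z i) ^ 2 / (4 * s ^ 2) - 1 / (2 * s)) * F z) := by
    intro z
    rw [← Finset.mul_sum, ← Finset.sum_mul, Finset.sum_sub_distrib, ← Finset.sum_div,
      ← EuclideanSpace.real_norm_sq_eq]
    simp
    left; left; ring
  simp_rw [h1, Finset.mul_sum]
  rw [integral_finsetSum, integral_finsetSum]
  · exact Finset.sum_congr rfl fun i _ => ibp hs i (hF i) (hF1 i) n0 (n1 i) (n2 i)
  · exact fun i _ => (n2 i).integrable hs
  · intro i _
    have nd : Nice (fun _ (z : E n) => (z i) ^ 2 / (4 * s ^ 2) - 1 / (2 * s)) := by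
      have := (((Nice.coord i).pow 2).mul (Nice.const (1 / (4 * s ^ 2)))).sub
        (Nice.const (1 / (2 * s)))
      simpa [div_eq_mul_inv] using this
    exact (nd.mul n0).integrable hs

/-- The key differentiation lemma. -/
lemma key {F Fs : ℝ → E n → ℝ} {F1 F2 : Fin n → ℝ → E n → ℝ} (nF : Nice F) (nFs : Nice Fs)
    (n1 : ∀ i, Nice (F1 i)) (n2 : ∀ i, Nice (F2 i))
    (hd : ∀ s, 0 < s → ∀ z, HasDerivAt (fun s => F s z) (Fs s z) s)
    (hF : ∀ i s, 0 < s → ∀ z, HasLineDerivAt ℝ (F s) (F1 i s z) z (EuclideanSpace.single i 1))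
    (hF1 : ∀ i s, 0 < s → ∀ z, HasLineDerivAt ℝ (F1 i s) (F2 i s z) z (EuclideanSpace.single i 1))
    {s : ℝ} (hs : 0 < s) :
    HasDerivAt (fun s => ∫ z, gam s z * F s z) (∫ z, gam s z * (Fs s z + ∑ i, F2 i s z)) s := by
  have nd : Nice (fun _ (z : E n) => ‖z‖ ^ 2 / (4 * s ^ 2) - n / (2 * s)) := by
    have := (Nice.normSq.mul (Nice.const (1 / (4 * s ^ 2)))).sub
      (Nice.const (n := n) (n / (2 * s)))
    simpa [div_eq_mul_inv] using this
  convert time_deriv nF nFs hd hs using 1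
  have i1 := (nd.mul nF).integrable hs
  have i2 := nFs.integrable hs
  have i3 := (Nice.sum Finset.univ n2).integrable hs
  simp_rw [mul_add]
  rw [integral_add i2 i3, integral_add i1 i2, lap hs (fun i => hF i s hs) (fun i => hF1 i s hs)
    (nF.freeze hs) (fun i => (n1 i).freeze hs) (fun i => (n2 i).freeze hs), add_comm]
lemma gam_integral {s : ℝ} (hs : 0 < s) : ∫ z : E n, gam s z = 1 := by
  unfold gam
  rw [integral_const_mul]
  have : ∀ z : E n, Real.exp (-‖z‖ ^ 2 / (4 * s)) = Real.exp (-(1 / (4 * s)) * ‖z‖ ^ 2) := by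
    intro z; congr 1; ring
  simp_rw [this]
  rw [GaussianFourier.integral_rexp_neg_mul_sq_norm (by positivity)]
  rw [show π / (1 / (4 * s)) = 4 * π * s by field_simp, ← Real.rpow_add (by positivity)]
  simp
  ring_nf
  simp

lemma gam_shift {s : ℝ} (hs : 0 < s) (z y : E n) :
    gam s z * Real.exp (inner ℝ z y - s * ‖y‖ ^ 2) = gam s (z - (2 * s) • y) := by
  unfold gam
  rw [mul_assoc, ← Real.exp_add, norm_sub_sq_real, inner_smul_right, norm_smul]
  congr 2
  rw [mul_pow, Real.norm_eq_abs, sq_abs]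
  field_simp
  ring

lemma M_fubini {g : E n → ℝ} (hg : CS g) {s : ℝ} (hs : 0 < s) :
    ∫ z, gam s z * M g s z = ∫ y, g y := by
  unfold M
  simp_rw [← integral_const_mul]
  rw [integral_integral_swap]
  · congr 1; ext y
    simp_rw [← mul_assoc, gam_shift hs]
    rw [integral_mul_const, integral_sub_right_eq_self (fun z => gam s z), gam_integral hs, one_mul]
  · obtain ⟨R, hR, h⟩ := hg.radius
    have h1 : Integrable (fun z : E n => gam s z * Real.exp (R * ‖z‖)) :=
      gam_mul_integrable hs (by fun_prop) (C := 1) (a := R) (by simp)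
    have hgc := hg.1
    have hga := gam_cont (n := n) s
    refine (h1.mul_prod hg.integrable.abs).mono' ?_ (Filter.Eventually.of_forall fun p => ?_)
    · apply Continuous.aestronglyMeasurable
      simp only [Function.uncurry_def]
      fun_prop
    · obtain ⟨z, y⟩ := p
      simp only [Function.uncurry_def]
      rw [Real.norm_eq_abs, abs_mul, abs_mul, abs_of_pos (gam_pos hs z),
        abs_of_pos (Real.exp_pos _), mul_assoc]
      refine mul_le_mul_of_nonneg_left ?_ (gam_pos hs z).le
      by_cases hy : g y = 0
      · simp [hy]
      gcongr
      have h1 : inner ℝ z y ≤ ‖z‖ * ‖y‖ := real_inner_le_norm z y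
      have h2 : ‖z‖ * ‖y‖ ≤ ‖z‖ * R := by gcongr; exact h y hy
      have : 0 ≤ s * ‖y‖ ^ 2 := by positivity
      linarith

lemma ld_mul {F G : E n → ℝ} {F' G' : ℝ} {z v : E n} (hF : HasLineDerivAt ℝ F F' z v)
    (hG : HasLineDerivAt ℝ G G' z v) :
    HasLineDerivAt ℝ (fun z => F z * G z) (F' * G z + F z * G') z v := by
  unfold HasLineDerivAt at *
  have := HasDerivAt.fun_mul hF hG
  simpa using this

lemma ld_sub {F G : E n → ℝ} {F' G' : ℝ} {z v : E n} (hF : HasLineDerivAt ℝ F F' z v)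
    (hG : HasLineDerivAt ℝ G G' z v) :
    HasLineDerivAt ℝ (fun z => F z - G z) (F' - G') z v := HasDerivAt.sub hF hG

lemma ld_inv {F : E n → ℝ} {F' : ℝ} {z v : E n} (hF : HasLineDerivAt ℝ F F' z v)
    (h : F z ≠ 0) : HasLineDerivAt ℝ (fun z => (F z)⁻¹) (-F' / F z ^ 2) z v := by
  unfold HasLineDerivAt at *
  simpa using HasDerivAt.fun_inv hF (by simpa using h)

lemma ld_log1 {F : E n → ℝ} {F' : ℝ} {z v : E n} (hF : HasLineDerivAt ℝ F F' z v)
    (h : F z ≠ 0) : HasLineDerivAt ℝ (fun z => Real.log (F z) + 1) (F' / F z) z v := by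
  unfold HasLineDerivAt at *
  simpa using (HasDerivAt.log hF (by simpa using h)).add_const 1


lemma L_deriv {f : E n → ℝ} (hf : CS f) (h0 : ∀ x, 0 ≤ f x) (h1 : ∫ x, f x = 1)
    {s : ℝ} (hs : 0 < s) :
    HasDerivAt (fun s => ∫ z, gam s z * (M f s z * Real.log (M f s z)))
      (∫ z, gam s z * ∑ i, (M (mc i f) s z) ^ 2 * (M f s z)⁻¹) s := by
  have nl := M_log_nice hf h0 h1
  have ni := M_inv_nice hf h0 h1
  have nM := M_nice hf
  have nM1 := fun i => M_nice (hf.mc i)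
  have nM2 := fun i => M_nice ((hf.mc i).mc i)
  have nl1 := nl.add (Nice.const (n := n) 1)
  have := key (F := fun s z => M f s z * Real.log (M f s z))
    (Fs := fun s z => (-∑ j, M (mc j (mc j f)) s z) * (Real.log (M f s z) + 1))
    (F1 := fun i s z => M (mc i f) s z * (Real.log (M f s z) + 1))
    (F2 := fun i s z => M (mc i (mc i f)) s z * (Real.log (M f s z) + 1)
      + (M (mc i f) s z) ^ 2 * (M f s z)⁻¹)
    (nM.mul nl) ((Nice.sum _ nM2).neg.mul nl1) (fun i => (nM1 i).mul nl1)
    (fun i => ((nM2 i).mul nl1).add (((nM1 i).pow 2).mul ni)) ?_ ?_ ?_ hs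
  · convert! this using 2
    ext z
    congr 1
    rw [Finset.sum_add_distrib, ← Finset.sum_mul (f := fun i => M (mc i (mc i f)) s z)]
    ring
  · intro s hs z
    have hp := M_pos hf h0 h1 hs z
    have hm := M_time hf s z
    convert! hm.mul (hm.log hp.ne') using 1
    field_simp
    ring
  · intro i s hs z
    have hp := M_pos hf h0 h1 hs z
    have hm := M_line hf s z i
    have := ld_sub (ld_mul hm (ld_log1 hm hp.ne')) hm
    convert! this using 1
    · ext z; ring
    · field_simp; ring
  · intro i s hs z
    have hp := M_pos hf h0 h1 hs z
    have hm := M_line hf s z i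
    have hm1 := M_line (hf.mc i) s z i
    convert! ld_mul hm1 (ld_log1 hm hp.ne') using 1
    field_simp

lemma P_deriv {f : E n → ℝ} (hf : CS f) (h0 : ∀ x, 0 ≤ f x) (h1 : ∫ x, f x = 1)
    (i : Fin n) {s : ℝ} (hs : 0 < s) :
    HasDerivAt (fun s => ∫ z, gam s z * ((M (mc i f) s z) ^ 2 * (M f s z)⁻¹))
      (∫ z, gam s z * ∑ j, 2 * (M f s z * (M (mc j (mc i f)) s z * (M f s z)⁻¹
        - M (mc i f) s z * M (mc j f) s z * ((M f s z)⁻¹) ^ 2) ^ 2)) s := by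
  have ni := M_inv_nice hf h0 h1
  have nM := M_nice hf
  have nM1 := fun i => M_nice (hf.mc i)
  have nMjj := fun i => M_nice ((hf.mc i).mc i)
  have nMij := fun j => M_nice ((hf.mc i).mc j)
  have nMijj := fun j => M_nice (((hf.mc i).mc j).mc j)
  have c2 := Nice.const (n := n) 2
  have c4 := Nice.const (n := n) 4
  have := key (F := fun s z => (M (mc i f) s z) ^ 2 * (M f s z)⁻¹)
    (Fs := fun s z => 2 * (M (mc i f) s z * (-∑ j, M (mc j (mc j (mc i f))) s z) * (M f s z)⁻¹)
      - M (mc i f) s z ^ 2 * (-∑ j, M (mc j (mc j f)) s z) * ((M f s z)⁻¹) ^ 2)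
    (F1 := fun j s z => 2 * (M (mc i f) s z * M (mc j (mc i f)) s z * (M f s z)⁻¹)
      - M (mc i f) s z ^ 2 * M (mc j f) s z * ((M f s z)⁻¹) ^ 2)
    (F2 := fun j s z => 2 * (M (mc j (mc i f)) s z ^ 2 * (M f s z)⁻¹)
      + 2 * (M (mc i f) s z * M (mc j (mc j (mc i f))) s z * (M f s z)⁻¹)
      - 4 * (M (mc i f) s z * M (mc j (mc i f)) s z * M (mc j f) s z * ((M f s z)⁻¹) ^ 2)
      - M (mc i f) s z ^ 2 * M (mc j (mc j f)) s z * ((M f s z)⁻¹) ^ 2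
      + 2 * (M (mc i f) s z ^ 2 * M (mc j f) s z ^ 2 * ((M f s z)⁻¹) ^ 3))
    (((nM1 i).pow 2).mul ni)
    ((c2.mul (((nM1 i).mul (Nice.sum _ nMijj).neg).mul ni)).sub
      ((((nM1 i).pow 2).mul (Nice.sum _ nMjj).neg).mul (ni.pow 2)))
    (fun j => (c2.mul (((nM1 i).mul (nMij j)).mul ni)).sub
      ((((nM1 i).pow 2).mul (nM1 j)).mul (ni.pow 2)))
    (fun j => ((((c2.mul (((nMij j).pow 2).mul ni)).add (c2.mul (((nM1 i).mul (nMijj j)).mul ni))).sub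
      (c4.mul ((((nM1 i).mul (nMij j)).mul (nM1 j)).mul (ni.pow 2)))).sub
      ((((nM1 i).pow 2).mul (nMjj j)).mul (ni.pow 2))).add
      (c2.mul ((((nM1 i).pow 2).mul ((nM1 j).pow 2)).mul (ni.pow 3)))) ?_ ?_ ?_ hs
  · convert! this using 2
    ext z
    congr 1
    have hp := M_pos hf h0 h1 hs z
    have e : 2 * (M (mc i f) s z * (-∑ j, M (mc j (mc j (mc i f))) s z) * (M f s z)⁻¹)
      - M (mc i f) s z ^ 2 * (-∑ j, M (mc j (mc j f)) s z) * ((M f s z)⁻¹) ^ 2 =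
      ∑ j, (-(2 * (M (mc i f) s z * (M (mc j (mc j (mc i f))) s z) * (M f s z)⁻¹))
      + M (mc i f) s z ^ 2 * (M (mc j (mc j f)) s z) * ((M f s z)⁻¹) ^ 2) := by
      simp only [Finset.sum_add_distrib, Finset.sum_neg_distrib, ← Finset.mul_sum, ← Finset.sum_mul]
      ring
    rw [e, ← Finset.sum_add_distrib]
    refine Finset.sum_congr rfl fun j _ => ?_
    field_simp
    ring
  · intro s hs z
    have hp := M_pos hf h0 h1 hs z
    have hm := M_time hf s z
    have hi := M_time (hf.mc i) s z
    convert! (hi.pow 2).mul (hm.inv hp.ne') using 1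
    simp only [Pi.pow_apply, Pi.inv_apply]
    field_simp
    push_cast
    ring
  · intro j s hs z
    have hp := M_pos hf h0 h1 hs z
    have hm := M_line hf s z j
    have hi := M_line (hf.mc i) s z j
    have := ld_mul (ld_mul hi hi) (ld_inv hm hp.ne')
    convert! this using 1
    · ext z; ring
    · field_simp; ring
  · intro j s hs z
    have hp := M_pos hf h0 h1 hs z
    have hm := M_line hf s z j
    have hi := M_line (hf.mc i) s z j
    have hj := M_line (hf.mc j) s z j
    have hij := M_line ((hf.mc i).mc j) s z j
    have hv := ld_inv hm hp.ne'
    have a1 := ld_mul (ld_mul hi hij) hv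
    have a2 := ld_mul (ld_mul (ld_mul hi hi) hj) (ld_mul hv hv)
    have := ld_sub (ld_mul a1 (v := EuclideanSpace.single j 1)
      (G := fun _ => 2) (G' := 0) (hasDerivAt_const _ _)) a2
    convert! this using 1
    · ext z; ring
    · field_simp; ring

lemma L1_deriv {f : E n → ℝ} (hf : CS f) (h0 : ∀ x, 0 ≤ f x) (h1 : ∫ x, f x = 1)
    {s : ℝ} (hs : 0 < s) :
    HasDerivAt (fun s => ∫ z, gam s z * ∑ i, (M (mc i f) s z) ^ 2 * (M f s z)⁻¹)
      (∑ i, (∫ z, gam s z * ∑ j, 2 * (M f s z * (M (mc j (mc i f)) s z * (M f s z)⁻¹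
        - M (mc i f) s z * M (mc j f) s z * ((M f s z)⁻¹) ^ 2) ^ 2))) s := by
  have h := HasDerivAt.fun_sum (u := Finset.univ) fun i _ => P_deriv hf h0 h1 i hs
  refine h.congr_of_eventuallyEq ?_
  filter_upwards [lt_mem_nhds hs] with r hr
  rw [← integral_finsetSum]
  · simp_rw [Finset.mul_sum]
  · intro i _
    exact (((M_nice (hf.mc i)).pow 2).mul (M_inv_nice hf h0 h1)).integrable hr

lemma main_ineq {f : E n → ℝ} (hf : CS f) (h0 : ∀ x, 0 ≤ f x) (h1 : ∫ x, f x = 1)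
    {s : ℝ} (hs : 0 < s) :
    ((∑ i, ∫ y, mc i (mc i f) y) - ∫ z, gam s z * ∑ i, (M (mc i f) s z) ^ 2 * (M f s z)⁻¹) ^ 2 ≤
    (n / 2) * ∑ i, (∫ z, gam s z * ∑ j, 2 * (M f s z * (M (mc j (mc i f)) s z * (M f s z)⁻¹
        - M (mc i f) s z * M (mc j f) s z * ((M f s z)⁻¹) ^ 2) ^ 2)) := by
  have ni := M_inv_nice hf h0 h1
  have nM := M_nice hf
  have nM1 := fun i => M_nice (hf.mc i)
  have nMjj := fun i => M_nice ((hf.mc i).mc i)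
  have nMij := fun i j => M_nice ((hf.mc i).mc j)
  have c2 := Nice.const (n := n) 2
  set q : Fin n → Fin n → E n → ℝ := fun i j z => M (mc j (mc i f)) s z * (M f s z)⁻¹
        - M (mc i f) s z * M (mc j f) s z * ((M f s z)⁻¹) ^ 2 with hq
  have nq : ∀ i j, Nice (fun _ => q i j) := fun i j =>
    (((nMij i j).mul ni).sub (((nM1 i).mul (nM1 j)).mul (ni.pow 2))).freeze hs
  have nMs := nM.freeze hs
  have nt := Nice.sum Finset.univ fun i => nq i i
  have n2 : ∀ i, Nice (fun _ z => ∑ j, 2 * (M f s z * (q i j z) ^ 2)) := fun i =>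
    Nice.sum _ fun j => c2.mul (nMs.mul ((nq i j).pow 2))
  set D := (∑ i, ∫ y, mc i (mc i f) y) - ∫ z, gam s z * ∑ i, (M (mc i f) s z) ^ 2 * (M f s z)⁻¹ with hD
  have hDq : D = ∫ z, gam s z * (M f s z * ∑ i, q i i z) := by
    have e : ∑ i, ∫ y, mc i (mc i f) y = ∫ z, gam s z * ∑ i, M (mc i (mc i f)) s z := by
      simp_rw [Finset.mul_sum]
      rw [integral_finsetSum _ fun i _ => (nMjj i).integrable hs]
      exact Finset.sum_congr rfl fun i _ => (M_fubini ((hf.mc i).mc i) hs).symm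
    rw [hD, e, ← integral_sub ((Nice.sum _ nMjj).integrable hs)
      ((Nice.sum _ fun i => ((nM1 i).pow 2).mul ni).integrable hs)]
    congr 1; ext z
    have hp := M_pos hf h0 h1 hs z
    rw [← mul_sub, ← Finset.sum_sub_distrib, Finset.mul_sum (a := M f s z)]
    congr 1
    refine Finset.sum_congr rfl fun i _ => ?_
    simp only [hq]
    field_simp
  have hone : ∫ z, gam s z * M f s z = 1 := by rw [M_fubini hf hs, h1]
  -- the variance inequality
  have hvar : D ^ 2 ≤ ∫ z, gam s z * (M f s z * (∑ i, q i i z) ^ 2) := by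
    have i1 := (nMs.mul (nt.pow 2)).integrable hs
    have i2 := (nMs.mul nt).integrable hs
    have i3 := nM.integrable hs
    have hnn : 0 ≤ ∫ z, (gam s z * (M f s z * (∑ i, q i i z) ^ 2)
        - (2 * D) * (gam s z * (M f s z * ∑ i, q i i z)) + D ^ 2 * (gam s z * M f s z)) := by
      refine integral_nonneg fun z => ?_
      have hp := M_pos hf h0 h1 hs z
      have hg := gam_pos hs z
      have : gam s z * (M f s z * (∑ i, q i i z) ^ 2)
        - (2 * D) * (gam s z * (M f s z * ∑ i, q i i z)) + D ^ 2 * (gam s z * M f s z) =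
        gam s z * M f s z * ((∑ i, q i i z) - D) ^ 2 := by ring
      simp only [Pi.zero_apply, this]
      positivity
    rw [integral_add (by exact i1.sub (i2.const_mul _)) (i3.const_mul _), integral_sub i1 (i2.const_mul _),
      integral_const_mul, integral_const_mul, ← hDq, hone] at hnn
    linarith
  refine hvar.trans ?_
  rw [← integral_finsetSum _ fun i _ => (n2 i).integrable hs, ← integral_const_mul]
  refine integral_mono ((nMs.mul (nt.pow 2)).integrable hs)
    ((integrable_finsetSum _ fun i _ => (n2 i).integrable hs).const_mul _) fun z => ?_
  have hp := M_pos hf h0 h1 hs z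
  have hg := gam_pos hs z
  dsimp only
  have k1 : (∑ i, q i i z) ^ 2 ≤ n * ∑ i, q i i z ^ 2 := by
    simpa using sq_sum_le_card_mul_sum_sq (s := Finset.univ) (f := fun i => q i i z)
  have k2 : ∑ i, q i i z ^ 2 ≤ ∑ i, ∑ j, q i j z ^ 2 := by
    refine Finset.sum_le_sum fun i _ => ?_
    exact Finset.single_le_sum (f := fun j => q i j z ^ 2) (fun j _ => sq_nonneg _) (Finset.mem_univ i)
  have k3 : (∑ i, q i i z) ^ 2 ≤ n * ∑ i, ∑ j, q i j z ^ 2 := k1.trans (by gcongr)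
  calc gam s z * (M f s z * (∑ i, q i i z) ^ 2)
      ≤ gam s z * (M f s z * (n * ∑ i, ∑ j, q i j z ^ 2)) := by gcongr
    _ = _ := by
      simp_rw [← Finset.mul_sum]
      ring


lemma heat_eq (f : E n → ℝ) {t : ℝ} (ht : 0 < t) (z : E n) :
    heatSol n f t ((2 * t) • z) =
      (4 * π * t) ^ (-(n : ℝ) / 2) * (Real.exp (-(t * ‖z‖ ^ 2)) * M f (1 / (4 * t)) z) := by
  unfold heatSol M
  rw [← integral_const_mul, ← integral_const_mul]
  congr 1; ext y
  rw [mul_assoc, ← mul_assoc (Real.exp _) (Real.exp _), ← Real.exp_add]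
  congr 3
  rw [norm_sub_sq_real, inner_smul_left, norm_smul, mul_pow, Real.norm_eq_abs, sq_abs]
  simp only [conj_trivial]
  field_simp
  ring

lemma kappa {t : ℝ} (ht : 0 < t) (z : E n) :
    (2 * t) ^ n * ((4 * π * t) ^ (-(n : ℝ) / 2) * Real.exp (-(t * ‖z‖ ^ 2))) =
      gam (1 / (4 * t)) z := by
  unfold gam
  rw [← mul_assoc]
  congr 1
  · rw [show 4 * π * t = (4 * π * (1 / (4 * t))) * (2 * t) ^ 2 by field_simp; ring,
      Real.mul_rpow (by positivity) (by positivity), ← Real.rpow_natCast (2 * t) 2,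
      ← Real.rpow_mul (by positivity), ← Real.rpow_natCast (2 * t) n, mul_left_comm,
      ← Real.rpow_add (by positivity)]
    have : (n : ℝ) + (2 : ℕ) * (-(n : ℝ) / 2) = 0 := by push_cast; ring
    rw [this, Real.rpow_zero, mul_one]
  · congr 1
    field_simp

lemma entropy_eq {f : E n → ℝ} (hf : CS f) (h0 : ∀ x, 0 ≤ f x) (h1 : ∫ x, f x = 1)
    {t : ℝ} (ht : 0 < t) :
    shannonEntropy n f t = n / 2 * Real.log (4 * π * t)
      + ((1 / (4 * t)) * (∑ i, ∫ y, mc i (mc i f) y) + n / 2)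
      - ∫ z, gam (1 / (4 * t)) z * (M f (1 / (4 * t)) z * Real.log (M f (1 / (4 * t)) z)) := by
  have hs : 0 < 1 / (4 * t) := by positivity
  have hts : 1 / (4 * (1 / (4 * t))) = t := by field_simp
  set s := 1 / (4 * t) with hsdef
  have nM := M_nice hf
  have nl := M_log_nice hf h0 h1
  have e1 : ∫ x, heatSol n f t x * Real.log (heatSol n f t x) = (2 * t) ^ n *
      ∫ z, heatSol n f t ((2 * t) • z) * Real.log (heatSol n f t ((2 * t) • z)) := by
    rw [Measure.integral_comp_smul volume (fun x => heatSol n f t x * Real.log (heatSol n f t x))]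
    simp only [finrank_euclideanSpace, Fintype.card_fin, smul_eq_mul]
    rw [abs_of_pos (by positivity), ← mul_assoc, mul_inv_cancel₀ (by positivity), one_mul]
  have e2 : ∀ z : E n, (2 * t) ^ n *
      (heatSol n f t ((2 * t) • z) * Real.log (heatSol n f t ((2 * t) • z))) =
      -(n / 2 * Real.log (4 * π * t)) * (gam s z * M f s z)
      - t * (gam s z * (‖z‖ ^ 2 * M f s z)) + gam s z * (M f s z * Real.log (M f s z)) := by
    intro z
    have hp := M_pos hf h0 h1 hs z
    rw [← kappa ht z, heat_eq f ht z, ← hsdef, Real.log_mul (by positivity) (by positivity),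
      Real.log_mul (by positivity) (by positivity), Real.log_exp, Real.log_rpow (by positivity)]
    ring
  have i1 := nM.integrable hs
  have i2 := (Nice.normSq.mul nM).integrable hs
  have i3 := (nM.mul nl).integrable hs
  have hone : ∫ z, gam s z * M f s z = 1 := by rw [M_fubini hf hs, h1]
  have hsec : ∫ z, gam s z * (‖z‖ ^ 2 * M f s z) =
      4 * s ^ 2 * (∑ i, ∫ y, mc i (mc i f) y) + 2 * s * n := by
    have nMjj := fun i => M_nice ((hf.mc i).mc i)
    have e : ∑ i, ∫ y, mc i (mc i f) y = ∫ z, gam s z * ∑ i, M (mc i (mc i f)) s z := by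
      simp_rw [Finset.mul_sum]
      rw [integral_finsetSum _ fun i _ => (nMjj i).integrable hs]
      exact Finset.sum_congr rfl fun i _ => (M_fubini ((hf.mc i).mc i) hs).symm
    have hl := lap hs (F := M f s) (F1 := fun i => M (mc i f) s) (F2 := fun i => M (mc i (mc i f)) s)
      (fun i z => M_line hf s z i) (fun i z => M_line (hf.mc i) s z i)
      (nM.freeze hs) (fun i => (M_nice (hf.mc i)).freeze hs) (fun i => (nMjj i).freeze hs)
    rw [← e] at hl
    rw [← hl]
    have : ∀ z : E n, gam s z * ((‖z‖ ^ 2 / (4 * s ^ 2) - n / (2 * s)) * M f s z) =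
        1 / (4 * s ^ 2) * (gam s z * (‖z‖ ^ 2 * M f s z)) - n / (2 * s) * (gam s z * M f s z) := by
      intro z; ring
    simp_rw [this]
    rw [integral_sub (i2.const_mul _) (i1.const_mul _), integral_const_mul, integral_const_mul, hone]
    field_simp
    ring
  unfold shannonEntropy
  rw [e1, ← integral_const_mul]
  simp_rw [e2]
  rw [integral_add (by exact (i1.const_mul _).sub (i2.const_mul _)) i3,
    integral_sub (i1.const_mul _) (i2.const_mul _), integral_const_mul, integral_const_mul, hone, hsec]
  rw [hsdef]
  field_simp
  ring


end EDI

/-- The entropy differential inequality `H'' + (2/n) H'² ≤ 0` along the heat flow on `ℝⁿ`: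
the entropy is twice differentiable on `(0,∞)` and satisfies EDI(0,n). -/
theorem entropy_differential_inequality (n : ℕ) (hn : 1 ≤ n)
    (f : EuclideanSpace ℝ (Fin n) → ℝ)
    (hf_cont : Continuous f) (hf_nonneg : ∀ x, 0 ≤ f x)
    (hf_supp : HasCompactSupport f)
    (hf_int : ∫ x, f x = 1) :
    ∀ t : ℝ, 0 < t →
      DifferentiableAt ℝ (shannonEntropy n f) t ∧
      DifferentiableAt ℝ (deriv (shannonEntropy n f)) t ∧
      deriv (deriv (shannonEntropy n f)) t
        + (2 / (n : ℝ)) * (deriv (shannonEntropy n f) t) ^ 2 ≤ 0 := by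
  have hf : EDI.CS f := ⟨hf_cont, hf_supp⟩
  obtain ⟨L, hL⟩ : ∃ L : ℝ → ℝ, L = fun s => ∫ z, EDI.gam s z *
    (EDI.M f s z * Real.log (EDI.M f s z)) := ⟨_, rfl⟩
  obtain ⟨L1, hL1⟩ : ∃ L1 : ℝ → ℝ, L1 = fun s => ∫ z, EDI.gam s z *
    ∑ i, (EDI.M (EDI.mc i f) s z) ^ 2 * (EDI.M f s z)⁻¹ := ⟨_, rfl⟩
  obtain ⟨L2, hL2⟩ : ∃ L2 : ℝ → ℝ, L2 = fun s => ∑ i, (∫ z, EDI.gam s z * ∑ j, 2 * (EDI.M f s z *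
      (EDI.M (EDI.mc j (EDI.mc i f)) s z * (EDI.M f s z)⁻¹
        - EDI.M (EDI.mc i f) s z * EDI.M (EDI.mc j f) s z * ((EDI.M f s z)⁻¹) ^ 2) ^ 2)) := ⟨_, rfl⟩
  obtain ⟨m2, hm2⟩ : ∃ m2 : ℝ, m2 = ∑ i, ∫ y, EDI.mc i (EDI.mc i f) y := ⟨_, rfl⟩
  have dL : ∀ s, 0 < s → HasDerivAt L (L1 s) s := fun s hs => by
    rw [hL, hL1]; exact EDI.L_deriv hf hf_nonneg hf_int hs
  have dL1 : ∀ s, 0 < s → HasDerivAt L1 (L2 s) s := fun s hs => by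
    rw [hL1, hL2]; exact EDI.L1_deriv hf hf_nonneg hf_int hs
  have hineq : ∀ s, 0 < s → (m2 - L1 s) ^ 2 ≤ n / 2 * L2 s := fun s hs => by
    rw [hL1, hL2, hm2]; exact EDI.main_ineq hf hf_nonneg hf_int hs
  have hH : ∀ t, 0 < t → shannonEntropy n f t = n / 2 * Real.log (4 * π * t)
      + ((1 / (4 * t)) * m2 + n / 2) - L (1 / (4 * t)) := fun t ht => by
    rw [hL, hm2]; exact EDI.entropy_eq hf hf_nonneg hf_int ht
  have hs : ∀ t : ℝ, 0 < t → HasDerivAt (fun t : ℝ => 1 / (4 * t)) (-(1 / (4 * t ^ 2))) t := by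
    intro t ht
    have := ((hasDerivAt_id t).const_mul 4).inv (by simp; positivity)
    convert! this using 1
    · ext t; simp
    · simp; field_simp
  have dH : ∀ t, 0 < t → HasDerivAt (shannonEntropy n f)
      (n / (2 * t) - (m2 - L1 (1 / (4 * t))) * (1 / (4 * t ^ 2))) t := by
    intro t ht
    have a1 : HasDerivAt (fun t : ℝ => 4 * π * t) (4 * π) t := by
      simpa using (hasDerivAt_id t).const_mul (4 * π)
    have a2 := (a1.log (by positivity)).const_mul (n / 2 : ℝ)
    have a3 := ((hs t ht).mul_const m2).add_const (n / 2 : ℝ)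
    have a4 := (dL (1 / (4 * t)) (by positivity)).comp t (hs t ht)
    have a5 := (a2.add a3).sub a4
    have a6 := a5.congr_of_eventuallyEq (f₁ := shannonEntropy n f) (by
      filter_upwards [lt_mem_nhds ht] with r hr
      rw [hH r hr]; rfl)
    convert! a6 using 1
    field_simp
    ring
  intro t ht
  have ddH : HasDerivAt (deriv (shannonEntropy n f))
      (-(n / (2 * t ^ 2)) + (m2 - L1 (1 / (4 * t))) * (1 / (2 * t ^ 3))
        - L2 (1 / (4 * t)) * (1 / (16 * t ^ 4))) t := by
    have b1 : HasDerivAt (fun t : ℝ => (n : ℝ) / (2 * t)) (-(n / (2 * t ^ 2))) t := by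
      have := (hs t ht).const_mul (2 * (n : ℝ))
      convert! this using 1
      · ext t; ring
      · ring
    have b2 := (dL1 (1 / (4 * t)) (by positivity)).comp t (hs t ht)
    have b3 : HasDerivAt (fun t : ℝ => 1 / (4 * t ^ 2)) (-(1 / (2 * t ^ 3))) t := by
      have := ((hs t ht).mul (hs t ht)).const_mul 4
      convert! this using 1
      · ext t; simp; ring
      · field_simp; norm_num
    have b4 := b1.sub ((b2.const_sub m2).mul b3)
    have b5 := b4.congr_of_eventuallyEq (f₁ := deriv (shannonEntropy n f)) (by
      filter_upwards [lt_mem_nhds ht] with r hr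
      rw [(dH r hr).deriv]; rfl)
    convert! b5 using 1
    simp only [Function.comp_apply]
    field_simp
    ring
  refine ⟨(dH t ht).differentiableAt, ddH.differentiableAt, ?_⟩
  rw [ddH.deriv, (dH t ht).deriv]
  have hi := hineq (1 / (4 * t)) (by positivity)
  generalize L1 (1 / (4 * t)) = a at *
  generalize L2 (1 / (4 * t)) = b at *
  have hn' : (0 : ℝ) < n := by exact_mod_cast hn
  have e : -(n / (2 * t ^ 2)) + (m2 - a) * (1 / (2 * t ^ 3)) - b * (1 / (16 * t ^ 4))
      + 2 / n * (n / (2 * t) - (m2 - a) * (1 / (4 * t ^ 2))) ^ 2 =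
      (1 / (8 * n * t ^ 4)) * ((m2 - a) ^ 2 - n / 2 * b) := by
    field_simp
    ring
  rw [e]
  exact mul_nonpos_of_nonneg_of_nonpos (by positivity) (by linarith)
end

section
/- Let n ≥ 1 and let f : ℝⁿ → ℝ be a nonnegative, continuous, compactly supported function with ∫_{ℝⁿ} f dx = 1, and let u(t,x) = ∫_{ℝⁿ} (4πt)^{-n/2} exp(-‖x-y‖²/(4t)) f(y) dy. Then for every t > 0 the entropy H(u(t)) = -∫ u log u dx is differentiable in t and (d/dt) H(u(t)) = ∫_{ℝⁿ} |∇ log u(t,x)|² u(t,x) dx (de Bruijn's identity: the entropy dissipation equals the Fisher information). -/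
open Real MeasureTheory

namespace DeBruijn

open Filter Topology

/-- Differentiation under the integral sign against a compactly supported continuous density. -/
lemma hasFDerivAt_param {n : ℕ} {H : Type*} [NormedAddCommGroup H] [NormedSpace ℝ H]
    [ProperSpace H]
    {f : EuclideanSpace ℝ (Fin n) → ℝ} (hf : Continuous f) (hs : HasCompactSupport f)
    (F : H → EuclideanSpace ℝ (Fin n) → ℝ) (F' : H → EuclideanSpace ℝ (Fin n) → (H →L[ℝ] ℝ))
    (x₀ : H) (ε : ℝ) (hε : 0 < ε)
    (hF : ∀ x ∈ Metric.closedBall x₀ ε, Continuous (F x))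
    (hF' : ContinuousOn (fun p : H × EuclideanSpace ℝ (Fin n) => F' p.1 p.2)
      (Metric.closedBall x₀ ε ×ˢ Set.univ))
    (hd : ∀ x ∈ Metric.closedBall x₀ ε, ∀ y, HasFDerivAt (fun x => F x y) (F' x y) x) :
    Integrable (fun y => f y • F' x₀ y) ∧
    HasFDerivAt (fun x => ∫ y, F x y * f y) (∫ y, f y • F' x₀ y) x₀ := by
  have hball : Metric.closedBall x₀ ε ∈ 𝓝 x₀ := Metric.closedBall_mem_nhds x₀ hε
  have hx₀ : x₀ ∈ Metric.closedBall x₀ ε := Metric.mem_closedBall_self hε.le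
  obtain ⟨C, hC⟩ := ((isCompact_closedBall x₀ ε).prod hs.isCompact).exists_bound_of_continuousOn
    (hF'.mono (Set.prod_mono le_rfl (Set.subset_univ _)))
  have hcont0 : Continuous (F' x₀) := by
    have : Continuous (fun y : EuclideanSpace ℝ (Fin n) => (x₀, y)) := by fun_prop
    exact hF'.comp_continuous this (fun y => ⟨hx₀, Set.mem_univ _⟩)
  have hI : Integrable (fun y => f y • F' x₀ y) :=
    (hf.smul hcont0).integrable_of_hasCompactSupport (hs.smul_right)
  refine ⟨hI, ?_⟩
  refine hasFDerivAt_integral_of_dominated_of_fderiv_le (F' := fun x y => f y • F' x y)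
    (bound := fun y => |f y| * C) hball ?_ ?_ hI.aestronglyMeasurable ?_ ?_ ?_
  · filter_upwards [hball] with x hx
    exact ((hF x hx).mul hf).aestronglyMeasurable
  · exact ((hF x₀ hx₀).mul hf).integrable_of_hasCompactSupport hs.mul_left
  · refine Eventually.of_forall fun y x hx => ?_
    by_cases hy : y ∈ tsupport f
    · rw [norm_smul, Real.norm_eq_abs]
      exact mul_le_mul_of_nonneg_left (hC (x, y) ⟨hx, hy⟩) (abs_nonneg _)
    · simp [image_eq_zero_of_notMem_tsupport hy]
  · exact ((hf.integrable_of_hasCompactSupport hs).abs).mul_const C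
  · refine Eventually.of_forall fun y x hx => ?_
    simpa using (hd x hx y).mul_const (f y)

/-- Polynomially weighted Gaussians are integrable. -/
lemma integrable_poly_gauss {n : ℕ} (k : ℕ) {a : ℝ} (ha : 0 < a) :
    Integrable (fun x : EuclideanSpace ℝ (Fin n) => (1 + ‖x‖ ^ 2) ^ k * exp (-a * ‖x‖ ^ 2)) := by
  have h0 : Integrable (fun x : EuclideanSpace ℝ (Fin n) => exp (-(a / 2) * ‖x‖ ^ 2)) := by
    have := (GaussianFourier.integrable_cexp_neg_mul_sq_norm_add
      (V := EuclideanSpace ℝ (Fin n)) (b := ((a / 2 : ℝ) : ℂ)) (by simpa using ha) 0 0).norm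
    refine this.congr (Eventually.of_forall fun x => ?_)
    simp only [Complex.norm_exp]
    congr 1
    simp [← Complex.ofReal_pow]
  set δ : ℝ := a / 2 / (k + 1) with hδ
  have hδ0 : 0 < δ := by positivity
  refine (h0.const_mul ((1 / δ) ^ k * exp (k * δ))).mono'
    (Continuous.aestronglyMeasurable (by fun_prop)) (Eventually.of_forall fun x => ?_)
  have hr : 0 ≤ ‖x‖ ^ 2 := by positivity
  generalize ‖x‖ ^ 2 = r at hr ⊢
  rw [Real.norm_of_nonneg (by positivity)]
  have h1 : 1 + r ≤ (1 / δ) * exp (δ * (1 + r)) := by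
    have := Real.add_one_le_exp (δ * (1 + r))
    rw [div_mul_eq_mul_div, le_div_iff₀ hδ0]
    linarith
  have h2 : (1 + r) ^ k ≤ (1 / δ) ^ k * exp (k * (δ * (1 + r))) := by
    calc (1 + r) ^ k ≤ ((1 / δ) * exp (δ * (1 + r))) ^ k := by gcongr
      _ = _ := by rw [mul_pow, ← Real.exp_nat_mul]
  calc (1 + r) ^ k * exp (-a * r) ≤ (1 / δ) ^ k * exp (k * (δ * (1 + r))) * exp (-a * r) := by
        gcongr
    _ = (1 / δ) ^ k * exp (k * δ + (k * δ * r - a * r)) := by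
        rw [mul_assoc, ← Real.exp_add]; ring_nf
    _ ≤ (1 / δ) ^ k * exp (k * δ + -(a / 2) * r) := by
        have : k * δ ≤ a / 2 := by
          rw [hδ, ← mul_div_assoc, div_le_iff₀ (by positivity)]
          nlinarith
        gcongr
        nlinarith
    _ = _ := by rw [Real.exp_add]; ring

/-- Integrability from a Gaussian bound. -/
lemma integrable_of_bound {n : ℕ} (k : ℕ) {a C : ℝ} (ha : 0 < a)
    {h : EuclideanSpace ℝ (Fin n) → ℝ} (hc : Continuous h)
    (hb : ∀ x, |h x| ≤ C * ((1 + ‖x‖ ^ 2) ^ k * exp (-a * ‖x‖ ^ 2))) : Integrable h :=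
  ((integrable_poly_gauss k ha).const_mul C).mono' hc.aestronglyMeasurable
    (Eventually.of_forall hb)

/-- The heat kernel. -/
noncomputable def G (n : ℕ) (s : ℝ) (z : EuclideanSpace ℝ (Fin n)) : ℝ :=
  (4 * π * s) ^ (-(n : ℝ) / 2) * exp (-‖z‖ ^ 2 / (4 * s))

/-- Convolution with `f`. -/
noncomputable def cv {n : ℕ} (f φ : EuclideanSpace ℝ (Fin n) → ℝ)
    (x : EuclideanSpace ℝ (Fin n)) : ℝ := ∫ y, φ (x - y) * f y

lemma heatSol_eq (n : ℕ) (f : EuclideanSpace ℝ (Fin n) → ℝ) (s : ℝ) :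
    heatSol n f s = cv f (G n s) := rfl

lemma G_pos {n : ℕ} {s : ℝ} (hs : 0 < s) (z : EuclideanSpace ℝ (Fin n)) : 0 < G n s z := by
  unfold G; positivity

lemma G_contDiff {n : ℕ} {s : ℝ} : ContDiff ℝ 1 (G n s) := by
  unfold G
  have : ContDiff ℝ 1 (fun z : EuclideanSpace ℝ (Fin n) => ‖z‖ ^ 2) := contDiff_norm_sq ℝ
  fun_prop

lemma G_hasFDerivAt {n : ℕ} {s : ℝ} (z : EuclideanSpace ℝ (Fin n)) :
    HasFDerivAt (G n s) ((-(1 / (2 * s)) * G n s z) • innerSL ℝ z) z := by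
  unfold G
  have h1 := (hasFDerivAt_id z).norm_sq
  have h2 := (((h1.neg).mul_const ((4 * s)⁻¹)).exp).const_mul ((4 * π * s) ^ (-(n : ℝ) / 2))
  refine h2.congr_fderiv ?_
  ext v
  simp [div_eq_mul_inv]
  ring

lemma G_hasDerivAt {n : ℕ} {s : ℝ} (hs : 0 < s) (z : EuclideanSpace ℝ (Fin n)) :
    HasDerivAt (fun s => G n s z) ((‖z‖ ^ 2 / (4 * s ^ 2) - n / (2 * s)) * G n s z) s := by
  unfold G
  have hp : 4 * π * s ≠ 0 := by positivity
  have h1 : HasDerivAt (fun s : ℝ => 4 * π * s) (4 * π) s := by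
    simpa using (hasDerivAt_id s).const_mul (4 * π)
  have h2 := h1.rpow_const (p := -(n : ℝ) / 2) (Or.inl hp)
  have h3 : HasDerivAt (fun s : ℝ => 4 * s) 4 s := by
    simpa using (hasDerivAt_id s).const_mul 4
  have h4 := ((hasDerivAt_const s (-‖z‖ ^ 2)).fun_div h3 (by positivity)).exp
  refine (h2.mul h4).congr_deriv ?_
  rw [Real.rpow_sub_one hp]
  field_simp
  ring

end DeBruijn

namespace DeBruijn

open Filter Topology

section conv

variable {n : ℕ} {f : EuclideanSpace ℝ (Fin n) → ℝ}

lemma cv_integrable (hf : Continuous f) (hs : HasCompactSupport f)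
    {φ : EuclideanSpace ℝ (Fin n) → ℝ} (hφ : Continuous φ) (x : EuclideanSpace ℝ (Fin n)) :
    Integrable (fun y => φ (x - y) * f y) :=
  ((hφ.comp (continuous_const.sub continuous_id)).mul hf).integrable_of_hasCompactSupport
    hs.mul_left

lemma cv_deriv (hf : Continuous f) (hs : HasCompactSupport f)
    {φ : EuclideanSpace ℝ (Fin n) → ℝ} (hφ : ContDiff ℝ 1 φ) (x : EuclideanSpace ℝ (Fin n)) :
    DifferentiableAt ℝ (cv f φ) x ∧
      ∀ v, fderiv ℝ (cv f φ) x v = cv f (fun z => fderiv ℝ φ z v) x := by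
  have hc : Continuous (fderiv ℝ φ) := hφ.continuous_fderiv one_ne_zero
  obtain ⟨hI, hD⟩ := hasFDerivAt_param hf hs (fun x y => φ (x - y))
    (fun x y => fderiv ℝ φ (x - y)) x 1 one_pos
    (fun x _ => hφ.continuous.comp (continuous_const.sub continuous_id))
    ((hc.comp (continuous_fst.sub continuous_snd)).continuousOn)
    (fun x _ y => by
      have h := (hφ.differentiable one_ne_zero (x - y)).hasFDerivAt.comp x
        ((hasFDerivAt_id x).sub_const y)
      rw [ContinuousLinearMap.comp_id] at h
      exact h)
  refine ⟨hD.differentiableAt, fun v => ?_⟩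
  have h := hD.fderiv
  change fderiv ℝ (cv f φ) x = _ at h
  rw [h, ContinuousLinearMap.integral_apply hI]
  simp [cv, mul_comm]

lemma cv_continuous (hf : Continuous f) (hs : HasCompactSupport f)
    {φ : EuclideanSpace ℝ (Fin n) → ℝ} (hφ : ContDiff ℝ 1 φ) : Continuous (cv f φ) :=
  continuous_iff_continuousAt.2 fun x => (cv_deriv hf hs hφ x).1.continuousAt

/-- time derivative of the kernel -/
noncomputable def Gt (n : ℕ) (s : ℝ) (z : EuclideanSpace ℝ (Fin n)) : ℝ :=
  (‖z‖ ^ 2 / (4 * s ^ 2) - n / (2 * s)) * G n s z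

/-- first space derivative of the kernel -/
noncomputable def Gi (n : ℕ) (s : ℝ) (i : Fin n) (z : EuclideanSpace ℝ (Fin n)) : ℝ :=
  -(1 / (2 * s)) * z i * G n s z

/-- second space derivative of the kernel -/
noncomputable def Gii (n : ℕ) (s : ℝ) (i : Fin n) (z : EuclideanSpace ℝ (Fin n)) : ℝ :=
  (z i ^ 2 / (4 * s ^ 2) - 1 / (2 * s)) * G n s z

lemma coord_contDiff (i : Fin n) :
    ContDiff ℝ 1 (fun z : EuclideanSpace ℝ (Fin n) => z i) :=
  (EuclideanSpace.proj (𝕜 := ℝ) i).contDiff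

lemma Gt_contDiff {s : ℝ} : ContDiff ℝ 1 (Gt n s) := by
  unfold Gt
  have : ContDiff ℝ 1 (fun z : EuclideanSpace ℝ (Fin n) => ‖z‖ ^ 2) := contDiff_norm_sq ℝ
  have := G_contDiff (n := n) (s := s)
  fun_prop

lemma Gi_contDiff {s : ℝ} (i : Fin n) : ContDiff ℝ 1 (Gi n s i) :=
  (contDiff_const.mul (coord_contDiff i)).mul G_contDiff

lemma Gii_contDiff {s : ℝ} (i : Fin n) : ContDiff ℝ 1 (Gii n s i) :=
  ((((coord_contDiff i).pow 2).div_const _).sub contDiff_const).mul G_contDiff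

lemma fderiv_G {s : ℝ} (i : Fin n) (z : EuclideanSpace ℝ (Fin n)) :
    fderiv ℝ (G n s) z (EuclideanSpace.single i 1) = Gi n s i z := by
  rw [(G_hasFDerivAt z).fderiv]
  simp [Gi, EuclideanSpace.inner_single_right]
  ring

lemma fderiv_Gi {s : ℝ} (i : Fin n) (z : EuclideanSpace ℝ (Fin n)) :
    fderiv ℝ (Gi n s i) z (EuclideanSpace.single i 1) = Gii n s i z := by
  have h1 : HasFDerivAt (fun z : EuclideanSpace ℝ (Fin n) => z i)
    (EuclideanSpace.proj (𝕜 := ℝ) i) z := (EuclideanSpace.proj (𝕜 := ℝ) i).hasFDerivAt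
  have h2 := (h1.const_mul (-(1 / (2 * s)))).mul (G_hasFDerivAt (s := s) z)
  have h3 : fderiv ℝ (Gi n s i) z = _ := h2.fderiv
  rw [h3]
  simp [Gii, EuclideanSpace.inner_single_right]
  ring

lemma sum_Gii {s : ℝ} (z : EuclideanSpace ℝ (Fin n)) :
    ∑ i, Gii n s i z = Gt n s z := by
  simp only [Gii, Gt, ← Finset.sum_mul, Finset.sum_sub_distrib, ← Finset.sum_div,
    ← EuclideanSpace.real_norm_sq_eq]
  simp

lemma sum_cv (hf : Continuous f) (hs : HasCompactSupport f) {s : ℝ}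
    (x : EuclideanSpace ℝ (Fin n)) : ∑ i, cv f (Gii n s i) x = cv f (Gt n s) x := by
  unfold cv
  rw [← integral_finsetSum _ (fun i _ => cv_integrable hf hs (Gii_contDiff i).continuous x)]
  simp_rw [← Finset.sum_mul, sum_Gii]

lemma cv_time (hf : Continuous f) (hs : HasCompactSupport f) {s : ℝ} (h0 : 0 < s)
    (x : EuclideanSpace ℝ (Fin n)) :
    HasDerivAt (fun s => cv f (G n s) x) (cv f (Gt n s) x) s := by
  have hpos : ∀ r ∈ Metric.closedBall s (s / 2), 0 < r := by
    intro r hr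
    rw [Real.closedBall_eq_Icc] at hr
    linarith [hr.1]
  obtain ⟨hI, hD⟩ := hasFDerivAt_param hf hs (fun s y => G n s (x - y))
    (fun s y => ContinuousLinearMap.toSpanSingleton ℝ (Gt n s (x - y))) s (s / 2) (by positivity)
    (fun r hr => G_contDiff.continuous.comp (continuous_const.sub continuous_id))
    (by
      have : ContinuousOn (fun p : ℝ × EuclideanSpace ℝ (Fin n) => Gt n p.1 (x - p.2))
          (Metric.closedBall s (s / 2) ×ˢ Set.univ) := by
        intro p hp
        have h1 := hpos p.1 hp.1
        refine ContinuousAt.continuousWithinAt ?_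
        unfold Gt G
        have h2 : ContinuousAt (fun p : ℝ × EuclideanSpace ℝ (Fin n) =>
            (4 * π * p.1) ^ (-(n : ℝ) / 2)) p := by
          refine ContinuousAt.rpow_const (by fun_prop) (Or.inl (by positivity))
        have h3 : 4 * p.1 ≠ 0 := by positivity
        have h4 : 4 * p.1 ^ 2 ≠ 0 := by positivity
        have h5 : 2 * p.1 ≠ 0 := by positivity
        have h6 : ContinuousAt (fun p : ℝ × EuclideanSpace ℝ (Fin n) => ‖x - p.2‖ ^ 2) p := by
          fun_prop
        refine ContinuousAt.mul (ContinuousAt.sub (h6.div (by fun_prop) h4)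
          (ContinuousAt.div (by fun_prop) (by fun_prop) h5)) (h2.mul ?_)
        exact (h6.neg.div (by fun_prop) h3).rexp
      exact (ContinuousLinearMap.toSpanSingletonCLE (𝕜 := ℝ) (E := ℝ)).continuous.comp_continuousOn
        this)
    (fun r hr y => (G_hasDerivAt (hpos r hr) (x - y)).hasFDerivAt)
  have h := hD.hasDerivAt
  rw [ContinuousLinearMap.integral_apply hI] at h
  refine h.congr_deriv ?_
  simp [cv, mul_comm]

lemma cv_mono (hf : Continuous f) (hs : HasCompactSupport f) (h0 : ∀ x, 0 ≤ f x)
    {R : ℝ} (hR : ∀ y, f y ≠ 0 → ‖y‖ ≤ R)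
    {φ ψ : EuclideanSpace ℝ (Fin n) → ℝ} (hφ : Continuous φ) (hψ : Continuous ψ)
    (x : EuclideanSpace ℝ (Fin n)) (c d : ℝ)
    (h : ∀ y, ‖y‖ ≤ R → c * φ (x - y) ≤ d * ψ (x - y)) :
    c * cv f φ x ≤ d * cv f ψ x := by
  unfold cv
  rw [← integral_const_mul, ← integral_const_mul]
  refine integral_mono ((cv_integrable hf hs hφ x).const_mul _)
    ((cv_integrable hf hs hψ x).const_mul _) fun y => ?_
  by_cases hy : f y = 0
  · simp [hy]
  · have := mul_le_mul_of_nonneg_right (h y (hR y hy)) (h0 y)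
    simp only
    linarith

lemma norm_up {R : ℝ} (x y : EuclideanSpace ℝ (Fin n)) (hy : ‖y‖ ≤ R) :
    ‖x - y‖ ^ 2 ≤ 2 * ‖x‖ ^ 2 + 2 * R ^ 2 := by
  have h1 := norm_sub_le x y
  have h2 : ‖x - y‖ ^ 2 ≤ (‖x‖ + ‖y‖) ^ 2 := by gcongr
  have h3 : ‖y‖ ^ 2 ≤ R ^ 2 := by gcongr
  nlinarith [sq_nonneg (‖x‖ - ‖y‖)]

lemma norm_low {R : ℝ} (x y : EuclideanSpace ℝ (Fin n)) (hy : ‖y‖ ≤ R) :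
    ‖x‖ ^ 2 / 2 - R ^ 2 ≤ ‖x - y‖ ^ 2 := by
  have h1 := norm_add_le (x - y) y
  rw [sub_add_cancel] at h1
  have h2 : ‖x‖ ^ 2 ≤ (‖x - y‖ + ‖y‖) ^ 2 := by gcongr
  have h3 : ‖y‖ ^ 2 ≤ R ^ 2 := by gcongr
  nlinarith [sq_nonneg (‖x - y‖ - ‖y‖)]

lemma cv_bound (hf : Continuous f) (hs : HasCompactSupport f) (h0 : ∀ x, 0 ≤ f x)
    {R : ℝ} (hR : ∀ y, f y ≠ 0 → ‖y‖ ≤ R) {s : ℝ} (hs0 : 0 < s)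
    {φ : EuclideanSpace ℝ (Fin n) → ℝ} (hφ : Continuous φ) {C : ℝ} (hC : 0 ≤ C)
    (hb : ∀ z, |φ z| ≤ C * (1 + ‖z‖ ^ 2) * G n s z) (x : EuclideanSpace ℝ (Fin n)) :
    |cv f φ x| ≤ C * (2 + 2 * R ^ 2) * (1 + ‖x‖ ^ 2) * cv f (G n s) x := by
  have key : ∀ y, ‖y‖ ≤ R →
      |φ (x - y)| ≤ C * (2 + 2 * R ^ 2) * (1 + ‖x‖ ^ 2) * G n s (x - y) := by
    intro y hy
    refine (hb _).trans ?_
    have h1 := norm_up x y hy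
    have h2 := (G_pos hs0 (x - y)).le
    have h3 : 1 + ‖x - y‖ ^ 2 ≤ (2 + 2 * R ^ 2) * (1 + ‖x‖ ^ 2) := by
      nlinarith [mul_nonneg (sq_nonneg R) (sq_nonneg ‖x‖)]
    rw [mul_assoc C (2 + 2 * R ^ 2)]
    gcongr
  rw [abs_le]
  constructor
  · have := cv_mono hf hs h0 hR hφ (G_contDiff (s := s)).continuous x (-1)
      (C * (2 + 2 * R ^ 2) * (1 + ‖x‖ ^ 2))
      (fun y hy => by linarith [neg_abs_le (φ (x - y)), key y hy])
    linarith
  · have := cv_mono hf hs h0 hR hφ (G_contDiff (s := s)).continuous x 1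
      (C * (2 + 2 * R ^ 2) * (1 + ‖x‖ ^ 2))
      (fun y hy => by linarith [le_abs_self (φ (x - y)), key y hy])
    linarith

lemma cv_const (hfint : ∫ x, f x = 1) (c : ℝ) (x : EuclideanSpace ℝ (Fin n)) :
    cv f (fun _ => c) x = c := by
  unfold cv
  rw [integral_const_mul, hfint, mul_one]

lemma u_bounds (hf : Continuous f) (hs : HasCompactSupport f) (h0 : ∀ x, 0 ≤ f x)
    (hfint : ∫ x, f x = 1)
    {R : ℝ} (hR : ∀ y, f y ≠ 0 → ‖y‖ ≤ R) {t : ℝ} (ht : 0 < t) :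
    ∃ A a B : ℝ, 0 < A ∧ 0 < a ∧ 0 ≤ B ∧ ∀ s ∈ Set.Icc (t / 2) (3 * t / 2), ∀ x,
      0 < cv f (G n s) x ∧ cv f (G n s) x ≤ A * exp (-a * ‖x‖ ^ 2) ∧
      |log (cv f (G n s) x)| ≤ B * (1 + ‖x‖ ^ 2) := by
  set A : ℝ := (2 * π * t) ^ (-(n : ℝ) / 2) * exp (R ^ 2 / (6 * t)) with hA
  set c : ℝ := (6 * π * t) ^ (-(n : ℝ) / 2) * exp (-R ^ 2 / t) with hc
  have hA0 : 0 < A := by positivity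
  have hc0 : 0 < c := by positivity
  refine ⟨A, 1 / (12 * t), |log A| + |log c| + 1 / t, hA0, by positivity, by positivity, ?_⟩
  intro s hs' x
  obtain ⟨hs1, hs2⟩ := hs'
  have hs0 : 0 < s := by linarith
  have hn : -(n : ℝ) / 2 ≤ 0 := by
    have : (0 : ℝ) ≤ n := Nat.cast_nonneg n
    linarith
  have hup : cv f (G n s) x ≤ A * exp (-(1 / (12 * t)) * ‖x‖ ^ 2) := by
    have := cv_mono hf hs h0 hR (G_contDiff (s := s)).continuous
      (continuous_const (y := A * exp (-(1 / (12 * t)) * ‖x‖ ^ 2))) x 1 1 (fun y hy => by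
        rw [one_mul, one_mul, G, hA, mul_assoc _ (exp _), ← Real.exp_add]
        refine mul_le_mul (Real.rpow_le_rpow_of_nonpos (by positivity) ?_ hn)
          (Real.exp_le_exp.2 ?_) (by positivity) (by positivity)
        · nlinarith [Real.pi_pos]
        · have h1 := norm_low x y hy
          have h2 : ‖x - y‖ ^ 2 / (6 * t) ≤ ‖x - y‖ ^ 2 / (4 * s) := by
            exact div_le_div_of_nonneg_left (by positivity) (by positivity) (by linarith)
          have h3 : (‖x‖ ^ 2 / 2 - R ^ 2) / (6 * t) ≤ ‖x - y‖ ^ 2 / (6 * t) := by gcongr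
          have h4 : (‖x‖ ^ 2 / 2 - R ^ 2) / (6 * t)
            = 1 / (12 * t) * ‖x‖ ^ 2 - R ^ 2 / (6 * t) := by field_simp; ring
          rw [neg_div]
          linarith)
    rwa [cv_const hfint, one_mul, one_mul] at this
  have hlo : c * exp (-(1 / t) * ‖x‖ ^ 2) ≤ cv f (G n s) x := by
    have := cv_mono hf hs h0 hR (continuous_const (y := c * exp (-(1 / t) * ‖x‖ ^ 2)))
      (G_contDiff (s := s)).continuous x 1 1 (fun y hy => by
        rw [one_mul, one_mul, G, hc, mul_assoc _ (exp _), ← Real.exp_add]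
        refine mul_le_mul (Real.rpow_le_rpow_of_nonpos (by positivity) ?_ hn)
          (Real.exp_le_exp.2 ?_) (by positivity) (by positivity)
        · nlinarith [Real.pi_pos]
        · have h1 := norm_up x y hy
          have h2 : ‖x - y‖ ^ 2 / (4 * s) ≤ ‖x - y‖ ^ 2 / (2 * t) := by
            exact div_le_div_of_nonneg_left (by positivity) (by positivity) (by linarith)
          have h3 : ‖x - y‖ ^ 2 / (2 * t) ≤ (2 * ‖x‖ ^ 2 + 2 * R ^ 2) / (2 * t) := by gcongr
          have h4 : (2 * ‖x‖ ^ 2 + 2 * R ^ 2) / (2 * t)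
            = 1 / t * ‖x‖ ^ 2 + R ^ 2 / t := by field_simp
          rw [neg_div, neg_div]
          linarith)
    rwa [cv_const hfint, one_mul, one_mul] at this
  have hpos : 0 < cv f (G n s) x := lt_of_lt_of_le (by positivity) hlo
  refine ⟨hpos, hup, ?_⟩
  have l1 := Real.log_le_log hpos hup
  have l2 := Real.log_le_log (by positivity) hlo
  rw [Real.log_mul hA0.ne' (Real.exp_pos _).ne', Real.log_exp] at l1
  rw [Real.log_mul hc0.ne' (Real.exp_pos _).ne', Real.log_exp] at l2
  have hr : 0 ≤ ‖x‖ ^ 2 := by positivity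
  have ht1 : 0 < 1 / t := by positivity
  have ht2 : 0 ≤ 1 / (12 * t) * ‖x‖ ^ 2 := by positivity
  have m1 := mul_nonneg (abs_nonneg (log A)) hr
  have m2 := mul_nonneg (abs_nonneg (log c)) hr
  rw [abs_le]
  constructor
  · nlinarith [neg_abs_le (log c), abs_nonneg (log A)]
  · nlinarith [le_abs_self (log A), abs_nonneg (log c), mul_nonneg ht1.le hr]

end conv

end DeBruijn

namespace DeBruijn

open Filter Topology

lemma Gt_bound {n : ℕ} {t s : ℝ} (ht : 0 < t) (hs : t / 2 ≤ s)
    (z : EuclideanSpace ℝ (Fin n)) :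
    |Gt n s z| ≤ (1 / t ^ 2 + n / t) * (1 + ‖z‖ ^ 2) * G n s z := by
  have hs0 : 0 < s := by linarith
  rw [Gt, abs_mul, abs_of_pos (G_pos hs0 z)]
  refine mul_le_mul_of_nonneg_right ?_ (G_pos hs0 z).le
  have h1 : ‖z‖ ^ 2 / (4 * s ^ 2) ≤ ‖z‖ ^ 2 / t ^ 2 :=
    div_le_div_of_nonneg_left (by positivity) (by positivity) (by nlinarith)
  have h2 : (n : ℝ) / (2 * s) ≤ n / t :=
    div_le_div_of_nonneg_left (by positivity) (by positivity) (by linarith)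
  have h3 : 0 ≤ ‖z‖ ^ 2 / (4 * s ^ 2) := by positivity
  have h4 : 0 ≤ (n : ℝ) / (2 * s) := by positivity
  have h5 : 0 ≤ (n : ℝ) / t * ‖z‖ ^ 2 := by positivity
  have h6 : 0 ≤ 1 / t ^ 2 := by positivity
  have h7 : ‖z‖ ^ 2 / t ^ 2 = 1 / t ^ 2 * ‖z‖ ^ 2 := by ring
  rw [abs_le]
  constructor <;> nlinarith

lemma coord_sq_le {n : ℕ} (i : Fin n) (z : EuclideanSpace ℝ (Fin n)) : z i ^ 2 ≤ ‖z‖ ^ 2 := by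
  rw [EuclideanSpace.real_norm_sq_eq]
  exact Finset.single_le_sum (f := fun i => z i ^ 2) (fun j _ => sq_nonneg _) (Finset.mem_univ i)

lemma Gi_bound {n : ℕ} {t : ℝ} (ht : 0 < t) (i : Fin n)
    (z : EuclideanSpace ℝ (Fin n)) :
    |Gi n t i z| ≤ (1 / (2 * t)) * (1 + ‖z‖ ^ 2) * G n t z := by
  rw [Gi, abs_mul, abs_of_pos (G_pos ht z), abs_mul, abs_neg,
    abs_of_nonneg (by positivity : 0 ≤ 1 / (2 * t))]
  refine mul_le_mul_of_nonneg_right ?_ (G_pos ht z).le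
  refine mul_le_mul_of_nonneg_left ?_ (by positivity)
  have := coord_sq_le i z
  nlinarith [sq_abs (z i), sq_nonneg (|z i| - 1)]

lemma Gii_bound {n : ℕ} {t : ℝ} (ht : 0 < t) (i : Fin n)
    (z : EuclideanSpace ℝ (Fin n)) :
    |Gii n t i z| ≤ (1 / (4 * t ^ 2) + 1 / (2 * t)) * (1 + ‖z‖ ^ 2) * G n t z := by
  rw [Gii, abs_mul, abs_of_pos (G_pos ht z)]
  refine mul_le_mul_of_nonneg_right ?_ (G_pos ht z).le
  have h1 : z i ^ 2 / (4 * t ^ 2) ≤ ‖z‖ ^ 2 / (4 * t ^ 2) := by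
    gcongr ?_ / _
    exact coord_sq_le i z
  have h3 : 0 ≤ z i ^ 2 / (4 * t ^ 2) := by positivity
  have h4 : 0 ≤ 1 / (2 * t) := by positivity
  have h5 : 0 ≤ 1 / (2 * t) * ‖z‖ ^ 2 := by positivity
  have h6 : 0 ≤ 1 / (4 * t ^ 2) := by positivity
  have h7 : ‖z‖ ^ 2 / (4 * t ^ 2) = 1 / (4 * t ^ 2) * ‖z‖ ^ 2 := by ring
  rw [abs_le]
  constructor <;> nlinarith

lemma norm_gradient_sq {n : ℕ} (F : EuclideanSpace ℝ (Fin n) → ℝ)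
    (x : EuclideanSpace ℝ (Fin n)) :
    ‖gradient F x‖ ^ 2 = ∑ i, (fderiv ℝ F x (EuclideanSpace.single i 1)) ^ 2 := by
  rw [EuclideanSpace.real_norm_sq_eq]
  refine Finset.sum_congr rfl fun i _ => ?_
  rw [← toDual_gradient, InnerProductSpace.toDual_apply_apply,
    EuclideanSpace.inner_single_right]
  simp

/-- Gaussian bound for a product of `u`, and two functions of controlled growth. -/
lemma prod_bound {w g l r P Q E : ℝ} (hr : 0 ≤ r) (hw : 0 ≤ w) (hP : 0 ≤ P)
    (hg : |g| ≤ P * (1 + r) * w) (hl : |l| ≤ Q * (1 + r)) (hQ : 0 ≤ Q) (hE : w ≤ E) :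
    |g * l| ≤ P * Q * ((1 + r) ^ 2 * E) := by
  rw [abs_mul]
  calc |g| * |l| ≤ (P * (1 + r) * w) * (Q * (1 + r)) := by gcongr
    _ = P * Q * ((1 + r) ^ 2 * w) := by ring
    _ ≤ _ := by gcongr

lemma entropy_hasDerivAt (n : ℕ)
    (f : EuclideanSpace ℝ (Fin n) → ℝ)
    (hf : Continuous f) (h0 : ∀ x, 0 ≤ f x)
    (hs : HasCompactSupport f)
    (hfint : ∫ x, f x = 1) (t : ℝ) (ht : 0 < t) :
    HasDerivAt (shannonEntropy n f)
        (∫ x, ‖gradient (fun y => Real.log (heatSol n f t y)) x‖ ^ 2 * heatSol n f t x) t := by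
  obtain ⟨R, hR'⟩ := hs.isCompact.isBounded.subset_closedBall 0
  have hR : ∀ y, f y ≠ 0 → ‖y‖ ≤ R := fun y hy => by
    simpa using hR' (subset_tsupport f hy)
  obtain ⟨A, a, B, hA, ha, hB, hu⟩ := u_bounds hf hs h0 hfint hR ht
  set K : ℝ := 2 + 2 * R ^ 2 with hK
  have hK0 : 0 ≤ K := by positivity
  have htI : t ∈ Set.Icc (t / 2) (3 * t / 2) := ⟨by linarith, by linarith⟩
  have hlog1 : ∀ s ∈ Set.Icc (t / 2) (3 * t / 2), ∀ x,
      |log (cv f (G n s) x) + 1| ≤ (B + 1) * (1 + ‖x‖ ^ 2) := by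
    intro s hs' x
    have h1 := (hu s hs' x).2.2
    have h2 := abs_add_le (log (cv f (G n s) x)) 1
    rw [abs_one] at h2
    nlinarith [sq_nonneg ‖x‖]
  have hGc : ∀ s, Continuous (cv f (G n s)) := fun s => cv_continuous hf hs G_contDiff
  have hlogc : ∀ s ∈ Set.Icc (t / 2) (3 * t / 2),
      Continuous (fun x => log (cv f (G n s) x)) := fun s hs' =>
    (hGc s).log fun x => (hu s hs' x).1.ne'
  have step1 : HasDerivAt (fun s => ∫ x, cv f (G n s) x * log (cv f (G n s) x))
      (∫ x, cv f (Gt n t) x * (log (cv f (G n t) x) + 1)) t := by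
    have hnb : Set.Icc (t / 2) (3 * t / 2) ∈ 𝓝 t := Icc_mem_nhds (by linarith) (by linarith)
    refine (hasDerivAt_integral_of_dominated_loc_of_deriv_le
      (F' := fun s x => cv f (Gt n s) x * (log (cv f (G n s) x) + 1))
      (bound := fun x => ((1 / t ^ 2 + n / t) * K) * (B + 1) *
        ((1 + ‖x‖ ^ 2) ^ 2 * (A * exp (-a * ‖x‖ ^ 2)))) hnb ?_ ?_ ?_ ?_ ?_ ?_).2
    · filter_upwards [hnb] with s hs'
      exact ((hGc s).mul (hlogc s hs')).aestronglyMeasurable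
    · refine integrable_of_bound 2 (C := 1 * B * A) ha ((hGc t).mul (hlogc t htI)) fun x => ?_
      obtain ⟨b1, b2, b3⟩ := hu t htI x
      refine (prod_bound (P := 1) (r := ‖x‖ ^ 2) (sq_nonneg _) b1.le zero_le_one ?_
        b3 hB b2).trans (le_of_eq (by ring))
      rw [abs_of_pos b1]
      nlinarith [sq_nonneg ‖x‖, mul_nonneg (sq_nonneg ‖x‖) b1.le]
    · exact ((cv_continuous hf hs Gt_contDiff).mul
        ((hlogc t htI).add continuous_const)).aestronglyMeasurable
    · refine Eventually.of_forall fun x s hs' => ?_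
      obtain ⟨b1, b2, b3⟩ := hu s hs' x
      exact prod_bound (sq_nonneg _) b1.le (by positivity)
        (cv_bound hf hs h0 hR (by linarith [hs'.1]) Gt_contDiff.continuous (by positivity)
          (Gt_bound ht hs'.1) x) (hlog1 s hs' x) (by positivity) b2
    · refine (((integrable_poly_gauss (n := n) 2 ha).const_mul A).const_mul
        (((1 / t ^ 2 + n / t) * K) * (B + 1))).congr (Eventually.of_forall fun x => ?_)
      simp only
      ring
    · refine Eventually.of_forall fun x s hs' => ?_
      have b1 := (hu s hs' x).1
      have hd := cv_time hf hs (show 0 < s by linarith [hs'.1]) x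
      refine (hd.mul (hd.log b1.ne')).congr_deriv ?_
      field_simp
  set u := cv f (G n t) with hudef
  have hu' : ∀ x, 0 < u x ∧ u x ≤ A * exp (-a * ‖x‖ ^ 2) ∧ |log (u x)| ≤ B * (1 + ‖x‖ ^ 2) :=
    hu t htI
  have hud : ∀ x, DifferentiableAt ℝ u x := fun x => (cv_deriv hf hs G_contDiff x).1
  have hui : ∀ i x, fderiv ℝ u x (EuclideanSpace.single i 1) = cv f (Gi n t i) x := by
    intro i x
    rw [(cv_deriv hf hs G_contDiff x).2]
    simp_rw [fderiv_G]
  have hgi : ∀ i x, fderiv ℝ (cv f (Gi n t i)) x (EuclideanSpace.single i 1)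
      = cv f (Gii n t i) x := by
    intro i x
    rw [(cv_deriv hf hs (Gi_contDiff i) x).2]
    simp_rw [fderiv_Gi]
  have hli : ∀ i x, fderiv ℝ (fun y => log (u y)) x (EuclideanSpace.single i 1)
      = cv f (Gi n t i) x / u x := by
    intro i x
    rw [fderiv.log (hud x) (hu' x).1.ne']
    simp only [smul_apply, hui, smul_eq_mul]
    ring
  have hli1 : ∀ i x, fderiv ℝ (fun y => log (u y) + 1) x (EuclideanSpace.single i 1)
      = cv f (Gi n t i) x / u x := by
    intro i x
    rw [fderiv_add_const, hli]
  have hgib : ∀ i x, |cv f (Gi n t i) x| ≤ (1 / (2 * t)) * K * (1 + ‖x‖ ^ 2) * u x :=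
    fun i x => cv_bound hf hs h0 hR ht (Gi_contDiff i).continuous (by positivity)
      (Gi_bound ht i) x
  have hgiib : ∀ i x, |cv f (Gii n t i) x|
      ≤ (1 / (4 * t ^ 2) + 1 / (2 * t)) * K * (1 + ‖x‖ ^ 2) * u x :=
    fun i x => cv_bound hf hs h0 hR ht (Gii_contDiff i).continuous (by positivity)
      (Gii_bound ht i) x
  have hgic : ∀ i, Continuous (cv f (Gi n t i)) := fun i => cv_continuous hf hs (Gi_contDiff i)
  have hgiic : ∀ i, Continuous (cv f (Gii n t i)) := fun i => cv_continuous hf hs (Gii_contDiff i)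
  have hl1c : Continuous (fun x => log (u x) + 1) := (hlogc t htI).add continuous_const
  have I1 : ∀ i, Integrable (fun x => cv f (Gi n t i) x / u x * cv f (Gi n t i) x) := by
    intro i
    refine integrable_of_bound 2 (C := (1 / (2 * t)) * K * ((1 / (2 * t)) * K) * A) ha
      (((hgic i).div (hGc t) fun x => (hu' x).1.ne').mul (hgic i)) fun x => ?_
    obtain ⟨b1, b2, b3⟩ := hu' x
    rw [mul_comm]
    refine (prod_bound (sq_nonneg _) b1.le (by positivity) (hgib i x)
      (l := cv f (Gi n t i) x / u x) (Q := (1 / (2 * t)) * K) ?_ (by positivity) b2).trans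
      (le_of_eq (by ring))
    rw [abs_div, abs_of_pos b1, div_le_iff₀ b1]
    exact hgib i x
  have I2 : ∀ i, Integrable (fun x => (log (u x) + 1) * cv f (Gii n t i) x) := by
    intro i
    refine integrable_of_bound 2
      (C := (1 / (4 * t ^ 2) + 1 / (2 * t)) * K * (B + 1) * A) ha
      (hl1c.mul (hgiic i)) fun x => ?_
    obtain ⟨b1, b2, b3⟩ := hu' x
    rw [mul_comm]
    exact (prod_bound (sq_nonneg _) b1.le (by positivity) (hgiib i x)
      (hlog1 t htI x) (by positivity) b2).trans (le_of_eq (by ring))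
  have I3 : ∀ i, Integrable (fun x => (log (u x) + 1) * cv f (Gi n t i) x) := by
    intro i
    refine integrable_of_bound 2
      (C := (1 / (2 * t)) * K * (B + 1) * A) ha
      (hl1c.mul (hgic i)) fun x => ?_
    obtain ⟨b1, b2, b3⟩ := hu' x
    rw [mul_comm]
    exact (prod_bound (sq_nonneg _) b1.le (by positivity) (hgib i x)
      (hlog1 t htI x) (by positivity) b2).trans (le_of_eq (by ring))
  have ibp : ∀ i, ∫ x, (log (u x) + 1) * cv f (Gii n t i) x
      = - ∫ x, cv f (Gi n t i) x / u x * cv f (Gi n t i) x := by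
    intro i
    have h := integral_mul_fderiv_eq_neg_fderiv_mul_of_integrable
      (μ := (volume : Measure (EuclideanSpace ℝ (Fin n))))
      (f := fun y => log (u y) + 1) (g := cv f (Gi n t i)) (v := EuclideanSpace.single i 1)
      (by simp_rw [hli1]; exact I1 i) (by simp_rw [hgi]; exact I2 i) (I3 i)
      (fun x _ => ((hud x).log (hu' x).1.ne').add_const 1)
      (fun x _ => (cv_deriv hf hs (Gi_contDiff i) x).1)
    simp_rw [hli1, hgi] at h
    exact h
  have final : -∫ x, cv f (Gt n t) x * (log (u x) + 1)
      = ∫ x, ‖gradient (fun y => Real.log (u y)) x‖ ^ 2 * u x := by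
    have e1 : ∀ x, cv f (Gt n t) x * (log (u x) + 1)
        = ∑ i, (log (u x) + 1) * cv f (Gii n t i) x := by
      intro x
      rw [← sum_cv hf hs x, Finset.sum_mul]
      exact Finset.sum_congr rfl fun i _ => mul_comm _ _
    have e2 : ∀ x, ‖gradient (fun y => Real.log (u y)) x‖ ^ 2 * u x
        = ∑ i, cv f (Gi n t i) x / u x * cv f (Gi n t i) x := by
      intro x
      have := (hu' x).1.ne'
      rw [norm_gradient_sq, Finset.sum_mul]
      refine Finset.sum_congr rfl fun i _ => ?_
      rw [hli]
      field_simp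
    simp_rw [e1, e2]
    rw [integral_finsetSum _ (fun i _ => I2 i), integral_finsetSum _ (fun i _ => I1 i),
      ← Finset.sum_neg_distrib]
    exact Finset.sum_congr rfl fun i _ => by rw [ibp i, neg_neg]
  rw [heatSol_eq, ← hudef, ← final]
  exact step1.neg

end DeBruijn

/-- de Bruijn's identity: along the heat flow on `ℝⁿ`, the entropy dissipation equals
the Fisher information, `H'(u(t)) = ∫ |∇ log u|² u dx`. -/
theorem deBruijn_identity (n : ℕ) (hn : 1 ≤ n)
    (f : EuclideanSpace ℝ (Fin n) → ℝ)
    (hf_cont : Continuous f) (hf_nonneg : ∀ x, 0 ≤ f x)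
    (hf_supp : HasCompactSupport f)
    (hf_int : ∫ x, f x = 1) :
    ∀ t : ℝ, 0 < t →
      HasDerivAt (shannonEntropy n f)
        (∫ x, ‖gradient (fun y => Real.log (heatSol n f t y)) x‖ ^ 2 * heatSol n f t x) t := by
  exact fun t ht => DeBruijn.entropy_hasDerivAt n f hf_cont hf_nonneg hf_supp hf_int t ht
end
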